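/- arXiv:2309.05233 — 5 statements merged into one kernel-verified Lean document; each statement's English description precedes it below -/
import Mathlib

section
/- There exists an absolute constant C such that for all a > 0, x > 0, every φ as in the context, and every real r ∈ [−1, 1], one has |φ̃(1 + 2ir)| = |∫_0^∞ J_{2ir}(u) φ(u) du/u| ≤ C. -/
open Real MeasureTheory

/-- The J-Bessel function of complex order `ν` at real argument `u`, defined by the series
`J_ν(u) = Σ_{j=0}^∞ ((−1)^j / (j! · Γ(j+1+ν))) · (u/2)^{2j+ν}`, where
`(u/2)^ν := exp(ν · log(u/2))` with the real logarithm. -/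
noncomputable def besselJ (ν : ℂ) (u : ℝ) : ℂ :=
  ∑' j : ℕ, ((-1 : ℂ) ^ j / ((Nat.factorial j : ℂ) * Complex.Gamma ((j : ℂ) + 1 + ν))) *
    Complex.exp ((2 * (j : ℂ) + ν) * (Real.log (u / 2) : ℂ))

/-!
For `-1/2 < Re ν`, expanding the cosine and integrating term by term against a Beta kernel gives
Poisson's formula
`J_ν(u) = (u/2)^ν / (√π Γ(ν + 1/2)) ∫₀¹ cos(u √s) s^(-1/2) (1 - s)^(ν - 1/2) ds`.
For purely imaginary `ν` the integral is at most `B(1/2, 1/2) = π` in norm, and the reflection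
formula evaluates `|Γ(ν + 1/2)|`, so that `|J_ν(u)| ≤ √cosh(π Im ν)` for every `u > 0`. It remains
to integrate `du / u` over an interval whose endpoints have a fixed ratio.
-/

lemma integral_norm_betaIntegrand {a b : ℂ} (ha : 0 < a.re) (hb : 0 < b.re) :
    ∫ s in (0 : ℝ)..1, ‖(s : ℂ) ^ (a - 1) * (1 - (s : ℂ)) ^ (b - 1)‖ =
      ProbabilityTheory.beta a.re b.re := by
  have h_norm : ∀ s ∈ Set.Ioo (0 : ℝ) 1,
      (s : ℂ) ^ ((a.re : ℂ) - 1) * (1 - (s : ℂ)) ^ ((b.re : ℂ) - 1) =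
        (‖(s : ℂ) ^ (a - 1) * (1 - (s : ℂ)) ^ (b - 1)‖ : ℂ) := by
    intro s hs
    have hs' : 0 < 1 - s := sub_pos.2 hs.2
    rw [show 1 - (s : ℂ) = ((1 - s : ℝ) : ℂ) by push_cast; rfl, norm_mul,
      Complex.norm_cpow_eq_rpow_re_of_pos hs.1, Complex.norm_cpow_eq_rpow_re_of_pos hs',
      Complex.ofReal_mul, Complex.ofReal_cpow hs.1.le, Complex.ofReal_cpow hs'.le]
    simp
  rw [ProbabilityTheory.beta_eq_betaIntegralReal _ _ ha hb, Complex.betaIntegral,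
    intervalIntegral.integral_congr_Ioo_of_le zero_le_one h_norm, intervalIntegral.integral_ofReal,
    Complex.ofReal_re]

lemma hasSum_mul_betaIntegral {a b : ℂ} (ha : 0 < a.re) (hb : 0 < b.re) {c : ℕ → ℂ}
    (hc : Summable c) :
    HasSum (fun j ↦ c j * Complex.betaIntegral (j + a) b)
      (∫ s in (0 : ℝ)..1,
        (∑' j, c j * (s : ℂ) ^ j) * ((s : ℂ) ^ (a - 1) * (1 - (s : ℂ)) ^ (b - 1))) := by
  set k : ℝ → ℂ := fun s ↦ (s : ℂ) ^ (a - 1) * (1 - (s : ℂ)) ^ (b - 1)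
  have hk : IntervalIntegrable k volume 0 1 := Complex.betaIntegral_convergent ha hb
  have h_term (j : ℕ) : ∫ s in (0 : ℝ)..1, c j * (s : ℂ) ^ j * k s =
      c j * Complex.betaIntegral (j + a) b := by
    rw [Complex.betaIntegral, ← intervalIntegral.integral_const_mul]
    refine intervalIntegral.integral_congr_Ioo_of_le zero_le_one fun s hs ↦ ?_
    have hs₀ : (s : ℂ) ≠ 0 := Complex.ofReal_ne_zero.2 hs.1.ne'
    simp only [k]
    rw [add_sub_assoc, Complex.cpow_add _ _ hs₀, Complex.cpow_natCast]
    ring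
  have h_pow {s : ℝ} (hs : s ∈ Set.uIoc (0 : ℝ) 1) (j : ℕ) : ‖c j * (s : ℂ) ^ j‖ ≤ ‖c j‖ := by
    rw [Set.uIoc_of_le zero_le_one] at hs
    rw [norm_mul, norm_pow, Complex.norm_of_nonneg hs.1.le]
    exact mul_le_of_le_one_right (norm_nonneg _) (pow_le_one₀ hs.1.le hs.2)
  simp only [← h_term]
  refine intervalIntegral.hasSum_integral_of_dominated_convergence
    (fun j s ↦ ‖c j‖ * ‖k s‖) (fun j ↦ ?_) (fun j ↦ ?_) ?_ ?_ ?_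
  · exact (by fun_prop : Continuous fun s : ℝ ↦ c j * (s : ℂ) ^ j).aestronglyMeasurable.mul
      hk.def'.aestronglyMeasurable
  · refine .of_forall fun s hs ↦ ?_
    rw [norm_mul]
    exact mul_le_mul_of_nonneg_right (h_pow hs j) (norm_nonneg _)
  · exact .of_forall fun s _ ↦ hc.norm.mul_right _
  · simp only [tsum_mul_right]
    exact hk.norm.const_mul _
  · exact .of_forall fun s hs ↦ (hc.norm.of_norm_bounded (h_pow hs)).hasSum.mul_right _

lemma Gamma_natCast_add_half_mul (j : ℕ) :
    Complex.Gamma (j + 1 / 2) * (4 ^ j * j.factorial) = (2 * j).factorial * (√π : ℂ) := by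
  have h_dup := Complex.Gamma_mul_Gamma_add_half ((j : ℂ) + 1 / 2)
  have h_two : (2 : ℂ) ^ (1 - 2 * ((j : ℂ) + 1 / 2)) * 4 ^ j = 1 := by
    rw [show (1 : ℂ) - 2 * (j + 1 / 2) = -((2 * j : ℕ) : ℂ) by push_cast; ring, Complex.cpow_neg,
      Complex.cpow_natCast, pow_mul]
    norm_num
  rw [add_assoc, add_halves, Complex.Gamma_nat_eq_factorial,
    show 2 * ((j : ℂ) + 1 / 2) = ((2 * j : ℕ) : ℂ) + 1 by push_cast; ring,
    Complex.Gamma_nat_eq_factorial] at h_dup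
  rw [show 2 * ((j : ℂ) + 1 / 2) = ((2 * j : ℕ) : ℂ) + 1 by push_cast; ring] at h_two
  linear_combination 4 ^ j * h_dup + (2 * j).factorial * (√π : ℂ) * h_two

lemma norm_Gamma_add_half_sq {ν : ℂ} (hν : ν.re = 0) :
    ‖Complex.Gamma (ν + 1 / 2)‖ ^ 2 = π / cosh (π * ν.im) := by
  have h_im : ν = ν.im * Complex.I := by simp [Complex.ext_iff, hν]
  have h_conj : 1 - (ν + 1 / 2) = (starRingEnd ℂ) (ν + 1 / 2) := by
    apply Complex.ext <;> norm_num [hν]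
  have h_sin : Complex.sin (π * (ν + 1 / 2)) = cosh (π * ν.im) := by
    rw [mul_add, mul_one_div, Complex.sin_add_pi_div_two, h_im, ← mul_assoc, Complex.cos_mul_I]
    simp
  have h_refl := Complex.Gamma_mul_Gamma_one_sub (ν + 1 / 2)
  rw [h_conj, Complex.Gamma_conj, Complex.mul_conj, Complex.normSq_eq_norm_sq, h_sin] at h_refl
  exact_mod_cast h_refl

section Poisson

variable {ν : ℂ} {u : ℝ}

lemma besselJ_term_eq_mul_betaIntegral (hν : -1 / 2 < ν.re) (hu : 0 < u) (j : ℕ) :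
    (-1 : ℂ) ^ j / (j.factorial * Complex.Gamma (j + 1 + ν)) *
        Complex.exp ((2 * j + ν) * Real.log (u / 2)) =
      ((u / 2 : ℝ) : ℂ) ^ ν / (√π * Complex.Gamma (ν + 1 / 2)) *
        (((-1) ^ j * u ^ (2 * j) / (2 * j).factorial : ℝ) *
          Complex.betaIntegral (j + 1 / 2) (ν + 1 / 2)) := by
  have hu₂ : ((u / 2 : ℝ) : ℂ) ≠ 0 := Complex.ofReal_ne_zero.2 (by positivity)
  have h_exp : Complex.exp ((2 * j + ν) * Real.log (u / 2)) =
      (u : ℂ) ^ (2 * j) / 4 ^ j * ((u / 2 : ℝ) : ℂ) ^ ν := by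
    rw [Complex.ofReal_log (by positivity), mul_comm, ← Complex.cpow_def_of_ne_zero hu₂,
      Complex.cpow_add _ _ hu₂, show (2 * j : ℂ) = ((2 * j : ℕ) : ℂ) by push_cast; rfl,
      Complex.cpow_natCast, Complex.ofReal_div, div_pow, pow_mul (Complex.ofReal 2)]
    norm_num
  have hν_half : 0 < (ν + 1 / 2).re := by norm_num; linarith
  have hj_half : 0 < ((j : ℂ) + 1 / 2).re := by norm_num; positivity
  have h_beta : Complex.betaIntegral (j + 1 / 2) (ν + 1 / 2) = (2 * j).factorial * √π *
      Complex.Gamma (ν + 1 / 2) / (4 ^ j * j.factorial * Complex.Gamma (j + 1 + ν)) := by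
    rw [Complex.betaIntegral_eq_Gamma_mul_div _ _ hj_half hν_half, ← Gamma_natCast_add_half_mul,
      show (j : ℂ) + 1 / 2 + (ν + 1 / 2) = j + 1 + ν by ring]
    have h_fact : (j.factorial : ℂ) ≠ 0 := Nat.cast_ne_zero.2 j.factorial_ne_zero
    generalize Complex.Gamma (j + 1 / 2) = Γj, Complex.Gamma (ν + 1 / 2) = Γν
    field_simp
  have hΓ : Complex.Gamma (ν + 1 / 2) ≠ 0 := Complex.Gamma_ne_zero_of_re_pos hν_half
  have h_sqrt : (√π : ℂ) ≠ 0 := Complex.ofReal_ne_zero.2 (by positivity)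
  have h_fact : ((2 * j).factorial : ℂ) ≠ 0 := Nat.cast_ne_zero.2 (Nat.factorial_ne_zero _)
  rw [h_exp, h_beta]
  generalize Complex.Gamma (ν + 1 / 2) = Γν at hΓ ⊢
  push_cast
  field_simp

lemma besselJ_eq_integral_cos (hν : -1 / 2 < ν.re) (hu : 0 < u) :
    besselJ ν u = ((u / 2 : ℝ) : ℂ) ^ ν / (√π * Complex.Gamma (ν + 1 / 2)) *
      ∫ s in (0 : ℝ)..1, (cos (u * √s) : ℂ) *
        ((s : ℂ) ^ ((1 / 2 : ℂ) - 1) * (1 - (s : ℂ)) ^ ((ν + 1 / 2) - 1)) := by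
  have h_cos : ∀ s ∈ Set.Ioo (0 : ℝ) 1,
      ∑' j : ℕ, (((-1) ^ j * u ^ (2 * j) / (2 * j).factorial : ℝ) : ℂ) * (s : ℂ) ^ j =
        (cos (u * √s) : ℂ) := by
    intro s hs
    rw [← (Complex.hasSum_ofReal.2 (Real.hasSum_cos (u * √s))).tsum_eq]
    refine tsum_congr fun j ↦ ?_
    rw [mul_pow, pow_mul √s, Real.sq_sqrt hs.1.le]
    push_cast
    ring
  have h_series := hasSum_mul_betaIntegral (a := 1 / 2) (b := ν + 1 / 2) (by norm_num)
    (by norm_num; linarith) (Complex.hasSum_ofReal.2 (Real.hasSum_cos u)).summable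
  rw [besselJ, tsum_congr (besselJ_term_eq_mul_betaIntegral hν hu), tsum_mul_left, h_series.tsum_eq]
  congr 1
  exact intervalIntegral.integral_congr_Ioo_of_le zero_le_one fun s hs ↦ by simp only [h_cos s hs]

lemma norm_besselJ_le_beta (hν : -1 / 2 < ν.re) (hu : 0 < u) :
    ‖besselJ ν u‖ ≤ (u / 2) ^ ν.re / (√π * ‖Complex.Gamma (ν + 1 / 2)‖) *
      ProbabilityTheory.beta (1 / 2) (ν.re + 1 / 2) := by
  have h_half : 0 < (1 / 2 : ℂ).re := by norm_num
  have hν_half : 0 < (ν + 1 / 2).re := by norm_num; linarith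
  have h_beta := integral_norm_betaIntegrand h_half hν_half
  rw [show (1 / 2 : ℂ).re = 1 / 2 by norm_num,
    show (ν + 1 / 2).re = ν.re + 1 / 2 by norm_num] at h_beta
  rw [besselJ_eq_integral_cos hν hu, norm_mul, norm_div, norm_mul,
    Complex.norm_cpow_eq_rpow_re_of_pos (half_pos hu), Complex.norm_of_nonneg (sqrt_nonneg π),
    ← h_beta]
  gcongr
  refine intervalIntegral.norm_integral_le_of_norm_le zero_le_one (.of_forall fun s _ ↦ ?_)
    (Complex.betaIntegral_convergent h_half hν_half).norm
  rw [norm_mul, Complex.norm_real]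
  exact mul_le_of_le_one_left (norm_nonneg _) (Real.abs_cos_le_one _)

lemma norm_besselJ_le_sqrt_cosh (hν : ν.re = 0) (hu : 0 < u) :
    ‖besselJ ν u‖ ≤ √(cosh (π * ν.im)) := by
  have h_beta : ProbabilityTheory.beta (1 / 2) (1 / 2) = π := by
    rw [ProbabilityTheory.beta, Real.Gamma_one_half_eq, add_halves, Real.Gamma_one, div_one,
      mul_self_sqrt pi_nonneg]
  have h_Gamma : ‖Complex.Gamma (ν + 1 / 2)‖ = √π / √(cosh (π * ν.im)) := by
    rw [← sqrt_div pi_nonneg, ← norm_Gamma_add_half_sq hν, sqrt_sq (norm_nonneg _)]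
  calc ‖besselJ ν u‖
    _ ≤ 1 / (√π * (√π / √(cosh (π * ν.im)))) * π := by
      have h := norm_besselJ_le_beta (by rw [hν]; norm_num) hu
      rwa [h_Gamma, hν, rpow_zero, zero_add, h_beta] at h
    _ = √(cosh (π * ν.im)) := by
      field_simp
      rw [sq_sqrt pi_nonneg]

end Poisson

lemma norm_integral_Ioi_div_le_mul_log {f : ℝ → ℂ} {A B M : ℝ} (hA : 0 < A) (hAB : A ≤ B)
    (hf : ∀ u ∈ Set.Icc A B, ‖f u‖ ≤ M) (hsupp : ∀ u ∉ Set.Icc A B, f u = 0) :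
    ‖∫ u in Set.Ioi (0 : ℝ), f u / (u : ℂ)‖ ≤ M * log (B / A) := by
  have h_subset : Set.Icc A B ⊆ Set.Ioi 0 := fun u hu ↦ hA.trans_le hu.1
  have h_inv : IntervalIntegrable (fun u : ℝ ↦ u⁻¹) volume A B :=
    intervalIntegrable_inv_iff.2 (.inr (Set.notMem_uIcc_of_lt hA (hA.trans_le hAB)))
  rw [setIntegral_eq_of_subset_of_forall_sdiff_eq_zero measurableSet_Ioi h_subset
      (fun u hu ↦ by rw [hsupp u hu.2, zero_div]),
    integral_Icc_eq_integral_Ioc, ← intervalIntegral.integral_of_le hAB,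
    ← integral_inv_of_pos hA (hA.trans_le hAB), ← intervalIntegral.integral_const_mul]
  refine intervalIntegral.norm_integral_le_of_norm_le hAB (.of_forall fun u hu ↦ ?_)
    (h_inv.const_mul M)
  have hu' := Set.Ioc_subset_Icc_self hu
  rw [norm_div, Complex.norm_of_nonneg (h_subset hu').le, div_eq_mul_inv]
  exact mul_le_mul_of_nonneg_right (hf u hu') (inv_nonneg.2 (h_subset hu').le)

theorem stmt1_general {ν : ℂ} {A κ T : ℝ} {φ : ℝ → ℂ} (hν : ν.re = 0) (hT : |ν.im| ≤ T)
    (hA : 0 < A) (hκ : 1 ≤ κ) (_ : Measurable φ) (hφ : ∀ u, ‖φ u‖ ≤ 1)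
    (hsupp : ∀ u ∉ Set.Icc A (κ * A), φ u = 0) :
    ‖∫ u in Set.Ioi (0 : ℝ), besselJ ν u * φ u / (u : ℂ)‖ ≤ √(cosh (π * T)) * log κ := by
  have h_cosh : cosh (π * ν.im) ≤ cosh (π * T) := by
    rw [cosh_le_cosh, abs_mul, abs_mul]
    exact mul_le_mul_of_nonneg_left (hT.trans (le_abs_self T)) (abs_nonneg π)
  have h_bessel : ∀ u ∈ Set.Icc A (κ * A), ‖besselJ ν u * φ u‖ ≤ √(cosh (π * T)) := by
    intro u hu
    calc ‖besselJ ν u * φ u‖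
      _ ≤ ‖besselJ ν u‖ := by
        rw [norm_mul]
        exact mul_le_of_le_one_right (norm_nonneg _) (hφ u)
      _ ≤ √(cosh (π * ν.im)) := norm_besselJ_le_sqrt_cosh hν (hA.trans_le hu.1)
      _ ≤ √(cosh (π * T)) := sqrt_le_sqrt h_cosh
  simpa only [mul_div_cancel_right₀ κ hA.ne'] using
    norm_integral_Ioi_div_le_mul_log hA (le_mul_of_one_le_left hA.le hκ) h_bessel
      fun u hu ↦ by rw [hsupp u hu, mul_zero]

theorem stmt1 :
    ∃ C : ℝ, ∀ (a x : ℝ) (φ : ℝ → ℝ) (r : ℝ), 0 < a → 0 < x →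
      Measurable φ → (∀ u, 0 ≤ φ u ∧ φ u ≤ 1) →
      (∀ u, u ∉ Set.Icc (3 * a / (8 * x)) (3 * a / (2 * x)) → φ u = 0) →
      -1 ≤ r → r ≤ 1 →
      ‖∫ u in Set.Ioi (0 : ℝ),
          besselJ (2 * Complex.I * (r : ℂ)) u * (φ u : ℂ) / (u : ℂ)‖ ≤ C := by
  refine ⟨√(cosh (π * 2)) * log 4, fun a x φ r ha hx hφm hφ hsupp hr₁ hr₂ ↦ ?_⟩
  have h_ratio : 3 * a / (2 * x) = 4 * (3 * a / (8 * x)) := by field_simp; norm_num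
  exact stmt1_general (A := 3 * a / (8 * x)) (by simp) (by simpa [abs_le] using ⟨hr₁, hr₂⟩)
    (by positivity) (by norm_num) (Complex.measurable_ofReal.comp hφm)
    (fun u ↦ by simpa [abs_of_nonneg (hφ u).1] using (hφ u).2)
    fun u hu ↦ by simp [hsupp u (h_ratio ▸ hu)]
end

section
/- For every ε > 0 and every c₀ > 0 there exists a constant C = C(ε, c₀) such that for all k ∈ {1/2, 3/2}, all a ≥ c₀, all x ≥ 2, every φ as in the context, and every real r with 0 < |r| ≤ 1, one has |φ̂(r)| ≤ C·(ax)^ε. -/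
open Real MeasureTheory

/-- `φ̂(r)` for weight `k` and real `r ≠ 0`. -/
noncomputable def phiHat (k : ℝ) (φ : ℝ → ℝ) (r : ℝ) : ℂ :=
  (π : ℂ) ^ 2 * Complex.exp ((1 + (k : ℂ)) * (π : ℂ) * Complex.I / 2) *
    (∫ u in Set.Ioi (0 : ℝ),
      (Complex.cos ((k : ℂ) * (π : ℂ) / 2 + (π : ℂ) * Complex.I * (r : ℂ)) *
          besselJ (2 * Complex.I * (r : ℂ)) u -
        Complex.cos ((k : ℂ) * (π : ℂ) / 2 - (π : ℂ) * Complex.I * (r : ℂ)) *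
          besselJ (-(2 * Complex.I * (r : ℂ))) u) * (φ u : ℂ) / (u : ℂ)) /
    ((Real.sinh (π * r) : ℂ) * ((Real.cosh (2 * π * r) : ℂ) + (Real.cos (π * k) : ℂ)) *
      Complex.Gamma (1 / 2 - (k : ℂ) / 2 + Complex.I * (r : ℂ)) *
      Complex.Gamma (1 / 2 - (k : ℂ) / 2 - Complex.I * (r : ℂ)))

/-!
The kernel of `phiHat` is `f(ν) - f(-ν)` at `ν = 2ir`, where `f(ν) = cos(π(k + ν)/2) J_ν(u)` is
entire. For `u ≤ 2` one has `f(ν) = O(exp(|Re ν| |log(u/2)|))` on bounded sets of `ν`, so the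
Schwarz lemma bounds the kernel by `O(|r| (1 + |log(u/2)|))`, and the factor `|r|` cancels the pole
of `1 / sinh(πr)`. For `u ≥ 2` the bound is propagated from `u = 2`: as a function `y` of
`s = log(u/2)` the kernel satisfies `d²y/ds² = -q y` with `q = 4 exp(2s) + (Im ν)²` increasing, so
the Sonin function `|y|² + |dy/ds|² / q` decreases. On the support of `φ`, where `u` is comparable
to `a / x`, the logarithm is `O((ax)^ε)` and the integral of `du / u` is bounded.
-/

open Metric

section InvGamma

lemma exists_norm_inv_Gamma_natCast_add_le (ρ : ℝ) :
    ∃ M, 0 ≤ M ∧ ∀ (n : ℕ) (ν : ℂ), ‖ν‖ ≤ ρ → ‖(Complex.Gamma (n + 1 + ν))⁻¹‖ ≤ M := by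
  obtain ⟨N, hN⟩ := exists_nat_ge ρ
  obtain ⟨M, hM⟩ := (isCompact_closedBall (0 : ℂ) (N + 1 + ρ)).exists_bound_of_continuousOn
    Complex.differentiable_one_div_Gamma.continuous.continuousOn
  have bound_of_le (n : ℕ) (hn : n ≤ N) (ν : ℂ) (hν : ‖ν‖ ≤ ρ) :
      ‖(Complex.Gamma (n + 1 + ν))⁻¹‖ ≤ M := by
    refine hM _ (mem_closedBall_zero_iff.2 ?_)
    have hnN : (n : ℝ) ≤ N := by exact_mod_cast hn
    calc ‖(n : ℂ) + 1 + ν‖ ≤ ‖(n : ℂ)‖ + ‖(1 : ℂ)‖ + ‖ν‖ := norm_add₃_le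
      _ ≤ N + 1 + ρ := by rw [Complex.norm_natCast, norm_one]; gcongr
  refine ⟨|M|, abs_nonneg M, fun n ν hν => ?_⟩
  rcases le_total n N with hn | hn
  · exact (bound_of_le n hn ν hν).trans (le_abs_self M)
  induction n, hn using Nat.le_induction with
  | base => exact (bound_of_le N le_rfl ν hν).trans (le_abs_self M)
  | succ n hn ih =>
    have one_le_norm : 1 ≤ ‖(n : ℂ) + 1 + ν‖ := by
      have hnN : (N : ℝ) ≤ n := by exact_mod_cast hn
      have hre := Complex.re_le_norm ((n : ℂ) + 1 + ν)
      have hν' := neg_le_of_abs_le (Complex.abs_re_le_norm ν)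
      simp only [Complex.add_re, Complex.natCast_re, Complex.one_re] at hre
      linarith
    rw [Complex.one_div_Gamma_eq_self_mul_one_div_Gamma_add_one, norm_mul] at ih
    calc ‖(Complex.Gamma ((n + 1 : ℕ) + 1 + ν))⁻¹‖
        = ‖(Complex.Gamma (n + 1 + ν + 1))⁻¹‖ := by push_cast; ring_nf
      _ ≤ ‖(n : ℂ) + 1 + ν‖ * ‖(Complex.Gamma (n + 1 + ν + 1))⁻¹‖ :=
        le_mul_of_one_le_left (norm_nonneg _) one_le_norm
      _ ≤ |M| := ih

end InvGamma

section BesselClifford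

open scoped Nat

/-- The Bessel–Clifford function `𝒞_ν(z) = Σ z^j / (j! Γ(j + 1 + ν))`, entire in both variables;
it strips `J_ν` of its factor `(u/2)^ν`. -/
noncomputable def besselClifford (ν z : ℂ) : ℂ :=
  ∑' j : ℕ, z ^ j / (j ! * Complex.Gamma (j + 1 + ν))

lemma exists_norm_besselClifford_term_le (ρ : ℝ) :
    ∃ M, 0 ≤ M ∧ ∀ (ν z : ℂ) (j : ℕ), ‖ν‖ ≤ ρ →
      ‖z ^ j / (j ! * Complex.Gamma (j + 1 + ν))‖ ≤ M * (‖z‖ ^ j / j !) := by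
  obtain ⟨M, hM₀, hM⟩ := exists_norm_inv_Gamma_natCast_add_le ρ
  refine ⟨M, hM₀, fun ν z j hν => ?_⟩
  rw [← div_div, div_eq_mul_inv, norm_mul, norm_div, norm_pow, Complex.norm_natCast, mul_comm]
  gcongr
  exact hM j ν hν

lemma summable_besselClifford (ν z : ℂ) :
    Summable fun j : ℕ => z ^ j / (j ! * Complex.Gamma (j + 1 + ν)) := by
  obtain ⟨M, -, hM⟩ := exists_norm_besselClifford_term_le ‖ν‖
  exact .of_norm_bounded ((Real.summable_pow_div_factorial ‖z‖).mul_left M)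
    fun j => hM ν z j le_rfl

lemma exists_norm_besselClifford_le (ρ : ℝ) :
    ∃ M, 0 ≤ M ∧ ∀ ν z : ℂ, ‖ν‖ ≤ ρ → ‖besselClifford ν z‖ ≤ M * Real.exp ‖z‖ := by
  obtain ⟨M, hM₀, hM⟩ := exists_norm_besselClifford_term_le ρ
  refine ⟨M, hM₀, fun ν z hν => tsum_of_norm_bounded (HasSum.mul_left M ?_) fun j => hM ν z j hν⟩
  rw [Real.exp_eq_exp_ℝ]
  exact NormedSpace.expSeries_div_hasSum_exp ‖z‖

lemma differentiable_besselClifford_order (z : ℂ) :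
    Differentiable ℂ fun ν => besselClifford ν z := by
  intro ν
  obtain ⟨M, -, hM⟩ := exists_norm_besselClifford_term_le (‖ν‖ + 1)
  refine (Complex.differentiableOn_tsum_of_summable_norm (U := ball 0 (‖ν‖ + 1))
    ((Real.summable_pow_div_factorial ‖z‖).mul_left M) (fun j => ?_) isOpen_ball
    fun j w hw => hM w z j (mem_ball_zero_iff.1 hw).le).differentiableAt
    (isOpen_ball.mem_nhds (by simp))
  simp only [div_eq_mul_inv, mul_inv]
  exact (((Complex.differentiable_one_div_Gamma.comp
    (differentiable_id.const_add ((j : ℂ) + 1))).const_mul _).const_mul _).differentiableOn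

lemma hasDerivAt_besselClifford (ν z : ℂ) :
    HasDerivAt (besselClifford ν) (besselClifford (ν + 1) z) z := by
  obtain ⟨M, hM₀, hM⟩ := exists_norm_besselClifford_term_le ‖ν‖
  let F (j : ℕ) (w : ℂ) : ℂ := w ^ j / (j ! * Complex.Gamma (j + 1 + ν))
  have hF (j : ℕ) : Differentiable ℂ (F j) := by fun_prop
  have hsummable := (Real.summable_pow_div_factorial (‖z‖ + 1)).mul_left M
  have hF_le (j : ℕ) (w : ℂ) (hw : w ∈ ball 0 (‖z‖ + 1)) :
      ‖F j w‖ ≤ M * ((‖z‖ + 1) ^ j / j !) := by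
    refine (hM ν w j le_rfl).trans ?_
    gcongr
    exact (mem_ball_zero_iff.1 hw).le
  have hz : z ∈ ball (0 : ℂ) (‖z‖ + 1) := by simp
  have hdiff : DifferentiableAt ℂ (besselClifford ν) z :=
    (Complex.differentiableOn_tsum_of_summable_norm hsummable
      (fun j => (hF j).differentiableOn) isOpen_ball hF_le).differentiableAt
      (isOpen_ball.mem_nhds hz)
  have hsum : HasSum (fun j => deriv (F j) z) (deriv (besselClifford ν) z) :=
    Complex.hasSum_deriv_of_summable_norm hsummable
      (fun j => (hF j).differentiableOn) isOpen_ball hF_le hz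
  have deriv_succ (j : ℕ) :
      deriv (F (j + 1)) z = z ^ j / (j ! * Complex.Gamma (j + 1 + (ν + 1))) := by
    simp only [F, deriv_div_const, deriv_pow_field, Nat.factorial_succ]
    have hj : (j : ℂ) + 1 ≠ 0 := by exact_mod_cast j.succ_ne_zero
    push_cast
    rw [mul_assoc, mul_div_mul_left _ _ hj,
      show (j : ℂ) + 1 + 1 + ν = j + 1 + (ν + 1) by ring]
  have hvalue : deriv (besselClifford ν) z = besselClifford (ν + 1) z := by
    rw [← hsum.tsum_eq, hsum.summable.tsum_eq_zero_add, tsum_congr deriv_succ]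
    simp [F, besselClifford]
  exact hvalue ▸ hdiff.hasDerivAt

lemma besselClifford_eq_add (ν z : ℂ) :
    besselClifford ν z =
      (ν + 1) * besselClifford (ν + 1) z + z * besselClifford (ν + 2) z := by
  let b (j : ℕ) : ℂ := z ^ j / (j ! * Complex.Gamma (j + 1 + (ν + 1)))
  have succ_mul_b_succ (j : ℕ) :
      (j + 1 : ℕ) * b (j + 1) = z * (z ^ j / (j ! * Complex.Gamma (j + 1 + (ν + 2)))) := by
    have hj : (j : ℂ) + 1 ≠ 0 := by exact_mod_cast j.succ_ne_zero
    simp only [b, Nat.factorial_succ]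
    push_cast
    rw [mul_assoc, mul_div_assoc', mul_div_mul_left _ _ hj, pow_succ', mul_div_assoc,
      show (j : ℂ) + 1 + 1 + (ν + 1) = j + 1 + (ν + 2) by ring]
  have hasSum_mul_b : HasSum (fun j : ℕ => j * b j) (z * besselClifford (ν + 2) z) := by
    rw [← hasSum_nat_add_iff' 1, funext succ_mul_b_succ]
    simpa [besselClifford] using (summable_besselClifford (ν + 2) z).hasSum.mul_left z
  have term_eq (j : ℕ) :
      z ^ j / (j ! * Complex.Gamma (j + 1 + ν)) = (ν + 1) * b j + j * b j := by
    simp only [b, ← add_assoc, ← div_div, div_eq_mul_inv _ (Complex.Gamma _)]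
    rw [Complex.one_div_Gamma_eq_self_mul_one_div_Gamma_add_one (j + 1 + ν)]
    ring
  rw [besselClifford, tsum_congr term_eq]
  exact (((summable_besselClifford (ν + 1) z).hasSum.mul_left (ν + 1)).add hasSum_mul_b).tsum_eq

end BesselClifford

section BesselJ

lemma exists_two_mul_exp_eq {u : ℝ} (hu : 0 < u) : ∃ s, 2 * Real.exp s = u :=
  ⟨Real.log (u / 2), by rw [Real.exp_log (half_pos hu), mul_div_cancel₀ _ two_ne_zero]⟩

lemma besselJ_two_mul_exp (ν : ℂ) (s : ℝ) :
    besselJ ν (2 * Real.exp s) =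
      Complex.exp (ν * s) * besselClifford ν (-Complex.exp (2 * s)) := by
  rw [besselJ, besselClifford, ← tsum_mul_left, mul_div_cancel_left₀ _ two_ne_zero, Real.log_exp]
  refine tsum_congr fun j => ?_
  have hexp : Complex.exp ((2 * j + ν) * s) = Complex.exp (ν * s) * Complex.exp (2 * s) ^ j := by
    rw [← Complex.exp_nat_mul, ← Complex.exp_add]
    ring_nf
  rw [hexp, neg_pow]
  ring

/-- The Euler derivative `u J_ν'(u)`, i.e. the derivative of `J_ν` in the variable `log u`,
expressed through `J_ν` and `J_{ν+1}`. -/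
noncomputable def eulerBesselJ (ν : ℂ) (u : ℝ) : ℂ :=
  ν * besselJ ν u - u * besselJ (ν + 1) u

lemma hasDerivAt_besselJ_two_mul_exp (ν : ℂ) (s : ℝ) :
    HasDerivAt (fun s : ℝ => besselJ ν (2 * Real.exp s)) (eulerBesselJ ν (2 * Real.exp s)) s := by
  have hpow : HasDerivAt (fun s : ℂ => Complex.exp (ν * s)) (Complex.exp (ν * s) * ν) (s : ℂ) := by
    simpa using ((hasDerivAt_id (s : ℂ)).const_mul ν).cexp
  have harg : HasDerivAt (fun s : ℂ => -Complex.exp (2 * s))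
      (-(Complex.exp (2 * s) * 2)) (s : ℂ) := by
    simpa using ((hasDerivAt_id (s : ℂ)).const_mul 2).cexp.fun_neg
  have hprod := (hpow.mul ((hasDerivAt_besselClifford ν _).comp _ harg)).comp_ofReal
  simp only [besselJ_two_mul_exp, eulerBesselJ]
  refine hprod.congr_deriv ?_
  have hexp : Complex.exp ((ν + 1) * s) = Complex.exp (ν * s) * Complex.exp s := by
    rw [add_mul, one_mul, Complex.exp_add]
  have hexp_two : Complex.exp (2 * s) = Complex.exp s ^ 2 := by
    rw [← Complex.exp_nat_mul]; norm_num
  push_cast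
  simp only [Function.comp_apply, hexp, hexp_two]
  ring

lemma besselJ_add_besselJ_add_two (ν : ℂ) {u : ℝ} (hu : 0 < u) :
    u * (besselJ ν u + besselJ (ν + 2) u) = 2 * (ν + 1) * besselJ (ν + 1) u := by
  obtain ⟨s, rfl⟩ := exists_two_mul_exp_eq hu
  have hexp_one : Complex.exp ((ν + 1) * s) = Complex.exp (ν * s) * Complex.exp s := by
    rw [add_mul, one_mul, Complex.exp_add]
  have hexp_two : Complex.exp ((ν + 2) * s) = Complex.exp (ν * s) * Complex.exp (2 * s) := by
    rw [add_mul, Complex.exp_add]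
  simp only [besselJ_two_mul_exp, hexp_one, hexp_two,
    besselClifford_eq_add ν (-Complex.exp (2 * s))]
  push_cast
  ring

-- Bessel's equation in the variable `s = log (u / 2)`, where it has no first-order term.
lemma hasDerivAt_eulerBesselJ_two_mul_exp (ν : ℂ) (s : ℝ) :
    HasDerivAt (fun s : ℝ => eulerBesselJ ν (2 * Real.exp s))
      (-(4 * Real.exp (2 * s) - ν ^ 2) * besselJ ν (2 * Real.exp s)) s := by
  have hu : HasDerivAt (fun s : ℝ => ((2 * Real.exp s : ℝ) : ℂ)) ((2 * Real.exp s : ℝ) : ℂ) s :=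
    ((Real.hasDerivAt_exp s).const_mul 2).ofReal_comp
  have hderiv := ((hasDerivAt_besselJ_two_mul_exp ν s).const_mul ν).sub
    (hu.mul (hasDerivAt_besselJ_two_mul_exp (ν + 1) s))
  refine hderiv.congr_deriv ?_
  have hrec := besselJ_add_besselJ_add_two ν (u := 2 * Real.exp s) (by positivity)
  have hexp : (Real.exp (2 * s) : ℂ) = Real.exp s ^ 2 := by
    rw [← Complex.ofReal_pow, ← Real.exp_nat_mul, Nat.cast_ofNat]
  simp only [eulerBesselJ, hexp, show ν + 1 + 1 = ν + 2 by ring]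
  simp only [Complex.ofReal_mul, Complex.ofReal_ofNat] at hrec ⊢
  linear_combination (2 * (Real.exp s : ℂ)) * hrec

lemma differentiable_besselJ_order (s : ℝ) :
    Differentiable ℂ fun ν => besselJ ν (2 * Real.exp s) := by
  simp only [besselJ_two_mul_exp]
  exact (by fun_prop : Differentiable ℂ fun ν : ℂ => Complex.exp (ν * s)).mul
    (differentiable_besselClifford_order _)

lemma differentiable_eulerBesselJ_order (s : ℝ) :
    Differentiable ℂ fun ν => eulerBesselJ ν (2 * Real.exp s) :=
  (differentiable_id.mul (differentiable_besselJ_order s)).sub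
    (((differentiable_besselJ_order s).comp (differentiable_id.add_const 1)).const_mul _)

lemma exists_norm_besselJ_two_mul_exp_le (ρ : ℝ) :
    ∃ M, 0 ≤ M ∧ ∀ (ν : ℂ) (s : ℝ), ‖ν‖ ≤ ρ → s ≤ 0 →
      ‖besselJ ν (2 * Real.exp s)‖ ≤ M * Real.exp (|ν.re| * |s|) := by
  obtain ⟨M, hM₀, hM⟩ := exists_norm_besselClifford_le ρ
  refine ⟨M * Real.exp 1, by positivity, fun ν s hν hs => ?_⟩
  have hpow : ‖Complex.exp (ν * s)‖ ≤ Real.exp (|ν.re| * |s|) := by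
    rw [Complex.norm_exp, Complex.re_mul_ofReal, ← abs_mul]
    gcongr
    exact le_abs_self _
  have harg : ‖-Complex.exp (2 * s)‖ ≤ 1 := by
    rw [norm_neg, Complex.norm_exp, Real.exp_le_one_iff, ← Complex.ofReal_ofNat,
      Complex.re_ofReal_mul, Complex.ofReal_re]
    linarith
  have hclifford : ‖besselClifford ν (-Complex.exp (2 * s))‖ ≤ M * Real.exp 1 :=
    (hM ν _ hν).trans (by gcongr)
  rw [besselJ_two_mul_exp, norm_mul, mul_comm]
  gcongr

lemma exists_norm_eulerBesselJ_two_le (ρ : ℝ) :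
    ∃ M, ∀ ν : ℂ, ‖ν‖ ≤ ρ → ‖eulerBesselJ ν 2‖ ≤ M := by
  obtain ⟨M, _, hM⟩ := exists_norm_besselJ_two_mul_exp_le (ρ + 1)
  have norm_besselJ_two_le (ν : ℂ) (hν : ‖ν‖ ≤ ρ + 1) : ‖besselJ ν 2‖ ≤ M := by
    simpa using hM ν 0 hν le_rfl
  refine ⟨ρ * M + 2 * M, fun ν hν => ?_⟩
  have hρ : 0 ≤ ρ := (norm_nonneg ν).trans hν
  have hν_succ : ‖ν + 1‖ ≤ ρ + 1 := (norm_add_le _ _).trans (by simpa using hν)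
  calc ‖eulerBesselJ ν 2‖ ≤ ‖ν‖ * ‖besselJ ν 2‖ + 2 * ‖besselJ (ν + 1) 2‖ := by
        simpa [eulerBesselJ] using norm_sub_le (ν * besselJ ν 2) (2 * besselJ (ν + 1) 2)
    _ ≤ ρ * M + 2 * M := by
        gcongr
        · exact norm_besselJ_two_le ν (hν.trans (by linarith))
        · exact norm_besselJ_two_le (ν + 1) hν_succ

end BesselJ

section Sonin

variable {E : Type*} [NormedAddCommGroup E] [InnerProductSpace ℝ E]

-- The terms `2⟪y, y'⟫` cancel in the derivative, leaving `-‖y'‖² q' / q²`.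
lemma antitone_norm_sq_add_norm_sq_div {y y' : ℝ → E} {q q' : ℝ → ℝ}
    (hy : ∀ s, HasDerivAt y (y' s) s) (hy' : ∀ s, HasDerivAt y' (-q s • y s) s)
    (hq : ∀ s, HasDerivAt q (q' s) s) (hq_pos : ∀ s, 0 < q s) (hq'_nonneg : ∀ s, 0 ≤ q' s) :
    Antitone fun s => ‖y s‖ ^ 2 + ‖y' s‖ ^ 2 / q s := by
  have hderiv (s : ℝ) : HasDerivAt (fun s => ‖y s‖ ^ 2 + ‖y' s‖ ^ 2 / q s)
      (-(‖y' s‖ ^ 2 * q' s / q s ^ 2)) s := by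
    have hq_ne := (hq_pos s).ne'
    refine ((hy s).norm_sq.add ((hy' s).norm_sq.div (hq s) hq_ne)).congr_deriv ?_
    rw [inner_smul_right, real_inner_comm (y' s) (y s)]
    field_simp
    ring
  refine antitone_of_hasDerivAt_nonpos hderiv fun s => neg_nonpos.2 ?_
  have := hq'_nonneg s
  positivity

lemma norm_le_add_of_hasDerivAt_neg_smul {y y' : ℝ → E} {q q' : ℝ → ℝ}
    (hy : ∀ s, HasDerivAt y (y' s) s) (hy' : ∀ s, HasDerivAt y' (-q s • y s) s)
    (hq : ∀ s, HasDerivAt q (q' s) s) (hq_pos : ∀ s, 0 < q s) (hq'_nonneg : ∀ s, 0 ≤ q' s)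
    {s₀ s : ℝ} (hs : s₀ ≤ s) (hq_one : 1 ≤ q s₀) : ‖y s‖ ≤ ‖y s₀‖ + ‖y' s₀‖ := by
  refine le_of_sq_le_sq ?_ (by positivity)
  calc ‖y s‖ ^ 2 ≤ ‖y s‖ ^ 2 + ‖y' s‖ ^ 2 / q s :=
        le_add_of_nonneg_right (div_nonneg (sq_nonneg _) (hq_pos s).le)
    _ ≤ ‖y s₀‖ ^ 2 + ‖y' s₀‖ ^ 2 / q s₀ :=
        antitone_norm_sq_add_norm_sq_div hy hy' hq hq_pos hq'_nonneg hs
    _ ≤ ‖y s₀‖ ^ 2 + ‖y' s₀‖ ^ 2 := by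
        gcongr
        exact div_le_self (sq_nonneg _) hq_one
    _ ≤ (‖y s₀‖ + ‖y' s₀‖) ^ 2 := by
        nlinarith [mul_nonneg (norm_nonneg (y s₀)) (norm_nonneg (y' s₀))]

end Sonin

section OddPart

variable {F : Type*} [NormedAddCommGroup F] [NormedSpace ℂ F] {f : ℂ → F} {M t : ℝ}

lemma norm_sub_comp_neg_le_of_norm_lt {δ : ℝ} (hf : DifferentiableOn ℂ f (ball 0 δ))
    (hM : ∀ z, ‖z‖ < δ → ‖f z‖ ≤ M) {z : ℂ} (hz : ‖z‖ < δ) :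
    ‖f z - f (-z)‖ ≤ 2 * M / δ * ‖z‖ := by
  have hmaps : Set.MapsTo Neg.neg (ball (0 : ℂ) δ) (ball 0 δ) := fun w hw => by simpa using hw
  have hodd : DifferentiableOn ℂ (fun w => f w - f (-w)) (ball 0 δ) :=
    hf.sub (hf.comp differentiable_neg.differentiableOn hmaps)
  have hbound : Set.MapsTo (fun w => f w - f (-w)) (ball 0 δ)
      (closedBall (f 0 - f (-0)) (2 * M)) := fun w hw => by
    have hw' : ‖w‖ < δ := mem_ball_zero_iff.1 hw
    rw [neg_zero, sub_self, mem_closedBall_zero_iff, two_mul]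
    exact (norm_sub_le _ _).trans (add_le_add (hM w hw') (hM (-w) (by rwa [norm_neg])))
  simpa [dist_eq_norm] using
    Complex.dist_le_div_mul_dist_of_mapsTo_ball hodd hbound (mem_ball_zero_iff.2 hz)

-- Apply the Schwarz lemma on the disc of radius `1 / (1 + t)`, where the exponential is at most
-- `e`; outside this disc the factor `‖z‖ * (1 + t)` is at least `1`.
lemma norm_sub_comp_neg_le_of_re_eq_zero {ρ : ℝ} (hf : Differentiable ℂ f) (ht : 0 ≤ t)
    (hρ : 1 ≤ ρ) (hM : ∀ z, ‖z‖ ≤ ρ → ‖f z‖ ≤ M * Real.exp (|z.re| * t)) {z : ℂ}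
    (hz_re : z.re = 0) (hz : ‖z‖ ≤ ρ) :
    ‖f z - f (-z)‖ ≤ 2 * (M * Real.exp 1) * ‖z‖ * (1 + t) := by
  have ht₁ : 0 < 1 + t := by positivity
  have hM₀ : 0 ≤ M := by simpa using (norm_nonneg _).trans (hM 0 (by simp; linarith))
  rcases lt_or_ge ‖z‖ (1 / (1 + t)) with hlt | hge
  · have hbound (w : ℂ) (hw : ‖w‖ < 1 / (1 + t)) : ‖f w‖ ≤ M * Real.exp 1 := by
      have hwt : ‖w‖ * (1 + t) < 1 := (lt_div_iff₀ ht₁).1 hw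
      have hw_one : ‖w‖ ≤ 1 := by nlinarith [norm_nonneg w]
      refine (hM w (hw_one.trans hρ)).trans ?_
      gcongr
      nlinarith [Complex.abs_re_le_norm w, norm_nonneg w]
    refine (norm_sub_comp_neg_le_of_norm_lt hf.differentiableOn hbound hlt).trans_eq ?_
    field_simp
  · have hone : 1 ≤ ‖z‖ * (1 + t) := (div_le_iff₀ ht₁).1 hge
    calc ‖f z - f (-z)‖ ≤ M + M := (norm_sub_le _ _).trans <| add_le_add
            (by simpa [hz_re] using hM z hz) (by simpa [hz_re] using hM (-z) (by rwa [norm_neg]))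
      _ = 2 * (M * 1) * 1 := by ring
      _ ≤ 2 * (M * Real.exp 1) * (‖z‖ * (1 + t)) := by
          gcongr
          exact Real.one_le_exp zero_le_one
      _ = 2 * (M * Real.exp 1) * ‖z‖ * (1 + t) := by ring

end OddPart

section Kernel

lemma norm_complex_cos_le_exp_abs_im (z : ℂ) : ‖Complex.cos z‖ ≤ Real.exp |z.im| := by
  have hpos : ‖Complex.exp (z * Complex.I)‖ ≤ Real.exp |z.im| := by
    rw [Complex.norm_exp, Complex.mul_I_re]
    exact Real.exp_le_exp.2 (neg_le_abs _)
  have hneg : ‖Complex.exp (-z * Complex.I)‖ ≤ Real.exp |z.im| := by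
    rw [Complex.norm_exp, Complex.mul_I_re, Complex.neg_im, neg_neg]
    exact Real.exp_le_exp.2 (le_abs_self _)
  rw [Complex.cos, norm_div, Complex.norm_ofNat, div_le_iff₀ two_pos, mul_two]
  exact (norm_add_le _ _).trans (add_le_add hpos hneg)

/-- The weight `cos(π(k + ν)/2)` that multiplies `J_ν` in the definition of `phiHat`. -/
noncomputable def phaseCos (k : ℝ) (ν : ℂ) : ℂ :=
  Complex.cos (k * π / 2 + π * ν / 2)

lemma differentiable_phaseCos (k : ℝ) : Differentiable ℂ (phaseCos k) := by
  unfold phaseCos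
  fun_prop

lemma norm_phaseCos_le (k : ℝ) (ν : ℂ) : ‖phaseCos k ν‖ ≤ Real.exp (π / 2 * ‖ν‖) := by
  refine (norm_complex_cos_le_exp_abs_im _).trans (Real.exp_le_exp.2 ?_)
  have him : (k * π / 2 + π * ν / 2 : ℂ).im = π / 2 * ν.im := by
    rw [show (k * π / 2 + π * ν / 2 : ℂ) = (k * π / 2 : ℝ) + (π / 2 : ℝ) * ν by push_cast; ring,
      Complex.add_im, Complex.ofReal_im, zero_add, Complex.im_ofReal_mul]
  rw [him, abs_mul, abs_of_pos pi_div_two_pos]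
  gcongr
  exact Complex.abs_im_le_norm ν

lemma exists_norm_phaseCos_mul_sub_le {ρ : ℝ} (hρ : 1 ≤ ρ) :
    ∃ B, 0 ≤ B ∧ ∀ (g : ℂ → ℂ) (M t : ℝ), Differentiable ℂ g → 0 ≤ t →
      (∀ ν, ‖ν‖ ≤ ρ → ‖g ν‖ ≤ M * Real.exp (|ν.re| * t)) →
      ∀ (k : ℝ) (ν : ℂ), ν.re = 0 → ‖ν‖ ≤ ρ →
        ‖phaseCos k ν * g ν - phaseCos k (-ν) * g (-ν)‖ ≤ B * M * ‖ν‖ * (1 + t) := by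
  refine ⟨2 * Real.exp (π / 2 * ρ) * Real.exp 1, by positivity, ?_⟩
  intro g M t hg ht hM k ν hν_re hν
  have hbound (μ : ℂ) (hμ : ‖μ‖ ≤ ρ) :
      ‖phaseCos k μ * g μ‖ ≤ Real.exp (π / 2 * ρ) * M * Real.exp (|μ.re| * t) := by
    rw [norm_mul, mul_assoc]
    gcongr
    · exact (norm_phaseCos_le k μ).trans (by gcongr)
    · exact hM μ hμ
  refine (norm_sub_comp_neg_le_of_re_eq_zero ((differentiable_phaseCos k).mul hg) ht hρ hbound
    hν_re hν).trans_eq ?_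
  ring

/-- The kernel of the integral transform `phiHat`, with `ν = 2ir`. -/
noncomputable def besselKernel (k : ℝ) (ν : ℂ) (u : ℝ) : ℂ :=
  phaseCos k ν * besselJ ν u - phaseCos k (-ν) * besselJ (-ν) u

/-- The Euler derivative `u ∂/∂u` of `besselKernel`. -/
noncomputable def eulerBesselKernel (k : ℝ) (ν : ℂ) (u : ℝ) : ℂ :=
  phaseCos k ν * eulerBesselJ ν u - phaseCos k (-ν) * eulerBesselJ (-ν) u

lemma hasDerivAt_besselKernel_two_mul_exp (k : ℝ) (ν : ℂ) (s : ℝ) :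
    HasDerivAt (fun s : ℝ => besselKernel k ν (2 * Real.exp s))
      (eulerBesselKernel k ν (2 * Real.exp s)) s :=
  ((hasDerivAt_besselJ_two_mul_exp ν s).const_mul _).sub
    ((hasDerivAt_besselJ_two_mul_exp (-ν) s).const_mul _)

lemma hasDerivAt_eulerBesselKernel_two_mul_exp (k : ℝ) {ν : ℂ} (hν : ν.re = 0) (s : ℝ) :
    HasDerivAt (fun s : ℝ => eulerBesselKernel k ν (2 * Real.exp s))
      (-(4 * Real.exp (2 * s) + ν.im ^ 2) • besselKernel k ν (2 * Real.exp s)) s := by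
  have hν_sq : ν ^ 2 = -(ν.im : ℂ) ^ 2 := by
    rw [← Complex.re_add_im ν, hν]
    simp [mul_pow]
  refine (((hasDerivAt_eulerBesselJ_two_mul_exp ν s).const_mul (phaseCos k ν)).sub
    ((hasDerivAt_eulerBesselJ_two_mul_exp (-ν) s).const_mul (phaseCos k (-ν)))).congr_deriv ?_
  rw [besselKernel, Complex.real_smul, neg_sq, hν_sq]
  push_cast
  ring

lemma norm_besselKernel_le_add (k : ℝ) {ν : ℂ} (hν : ν.re = 0) {s : ℝ} (hs : 0 ≤ s) :
    ‖besselKernel k ν (2 * Real.exp s)‖ ≤ ‖besselKernel k ν 2‖ + ‖eulerBesselKernel k ν 2‖ := by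
  have hq (s : ℝ) : HasDerivAt (fun s => 4 * Real.exp (2 * s) + ν.im ^ 2)
      (4 * (Real.exp (2 * s) * 2)) s := by
    simpa using ((((hasDerivAt_id s).const_mul 2).exp.const_mul 4).add_const (ν.im ^ 2))
  have hq_one : 1 ≤ 4 * Real.exp (2 * 0) + ν.im ^ 2 := by
    rw [mul_zero, Real.exp_zero]
    linarith [sq_nonneg ν.im]
  simpa using norm_le_add_of_hasDerivAt_neg_smul (hasDerivAt_besselKernel_two_mul_exp k ν)
    (hasDerivAt_eulerBesselKernel_two_mul_exp k hν) hq (fun s => by positivity)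
    (fun s => by positivity) hs hq_one

lemma exists_norm_besselKernel_le {ρ : ℝ} (hρ : 1 ≤ ρ) :
    ∃ C, 0 ≤ C ∧ ∀ (k : ℝ) (ν : ℂ) (u : ℝ), ν.re = 0 → ‖ν‖ ≤ ρ → 0 < u →
      ‖besselKernel k ν u‖ ≤ C * ‖ν‖ * (1 + |Real.log (u / 2)|) := by
  obtain ⟨B, hB₀, hB⟩ := exists_norm_phaseCos_mul_sub_le hρ
  obtain ⟨M, hM₀, hM⟩ := exists_norm_besselJ_two_mul_exp_le ρ
  obtain ⟨M', hM'⟩ := exists_norm_eulerBesselJ_two_le ρ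
  have hM'₀ : 0 ≤ M' := (norm_nonneg _).trans (hM' 0 (by simpa using zero_le_one.trans hρ))
  have kernel_le_of_nonpos (k : ℝ) (ν : ℂ) (s : ℝ) (hν_re : ν.re = 0) (hν : ‖ν‖ ≤ ρ) (hs : s ≤ 0) :
      ‖besselKernel k ν (2 * Real.exp s)‖ ≤ B * M * ‖ν‖ * (1 + |s|) :=
    hB _ M |s| (differentiable_besselJ_order s) (abs_nonneg s) (fun μ hμ => hM μ s hμ hs)
      k ν hν_re hν
  have eulerKernel_two_le (k : ℝ) (ν : ℂ) (hν_re : ν.re = 0) (hν : ‖ν‖ ≤ ρ) :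
      ‖eulerBesselKernel k ν 2‖ ≤ B * M' * ‖ν‖ := by
    simpa [eulerBesselKernel] using hB (fun μ => eulerBesselJ μ 2) M' 0
      (by simpa using differentiable_eulerBesselJ_order 0) le_rfl (by simpa using hM') k ν hν_re hν
  refine ⟨B * M + B * M', by positivity, fun k ν u hν_re hν hu => ?_⟩
  obtain ⟨s, rfl⟩ := exists_two_mul_exp_eq hu
  rw [mul_div_cancel_left₀ _ two_ne_zero, Real.log_exp]
  rcases le_total s 0 with hs | hs
  · refine (kernel_le_of_nonpos k ν s hν_re hν hs).trans ?_
    gcongr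
    exact le_add_of_nonneg_right (by positivity)
  · have kernel_two_le : ‖besselKernel k ν 2‖ ≤ B * M * ‖ν‖ := by
      simpa using kernel_le_of_nonpos k ν 0 hν_re hν le_rfl
    calc ‖besselKernel k ν (2 * Real.exp s)‖
        ≤ ‖besselKernel k ν 2‖ + ‖eulerBesselKernel k ν 2‖ := norm_besselKernel_le_add k hν_re hs
      _ ≤ B * M * ‖ν‖ + B * M' * ‖ν‖ := add_le_add kernel_two_le (eulerKernel_two_le k ν hν_re hν)
      _ = (B * M + B * M') * ‖ν‖ := by ring
      _ ≤ (B * M + B * M') * ‖ν‖ * (1 + |s|) :=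
        le_mul_of_one_le_right (by positivity) (le_add_of_nonneg_right (abs_nonneg s))

lemma exists_norm_integral_besselKernel_le {ρ : ℝ} (hρ : 1 ≤ ρ) :
    ∃ B, 0 ≤ B ∧ ∀ (k : ℝ) (ν : ℂ) (φ : ℝ → ℝ), ν.re = 0 → ‖ν‖ ≤ ρ →
      IntegrableOn (fun u => (1 + |Real.log (u / 2)|) * |φ u| / u) (Set.Ioi 0) →
      ‖∫ u in Set.Ioi (0 : ℝ), besselKernel k ν u * φ u / u‖ ≤
        B * ‖ν‖ * ∫ u in Set.Ioi 0, (1 + |Real.log (u / 2)|) * |φ u| / u := by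
  obtain ⟨B, hB₀, hB⟩ := exists_norm_besselKernel_le hρ
  refine ⟨B, hB₀, fun k ν φ hν_re hν hφ => ?_⟩
  rw [← integral_const_mul]
  refine norm_integral_le_of_norm_le (hφ.const_mul _)
    ((ae_restrict_iff' measurableSet_Ioi).2 (.of_forall fun u (hu : 0 < u) => ?_))
  rw [norm_div, norm_mul, Complex.norm_real, Complex.norm_real, Real.norm_eq_abs,
    Real.norm_of_nonneg hu.le, ← mul_div_assoc, ← mul_assoc]
  gcongr
  exact hB k ν u hν_re hν hu

end Kernel

section PhiHat

lemma abs_le_abs_sinh (x : ℝ) : |x| ≤ |Real.sinh x| := by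
  rw [Real.abs_sinh]
  exact Real.self_le_sinh_iff.2 (abs_nonneg x)

lemma cosh_add_cos_pos {x y : ℝ} (hy : Real.cos y ≠ -1) : 0 < Real.cosh x + Real.cos y := by
  linarith [Real.one_le_cosh x, (Real.neg_one_le_cos y).lt_of_ne' hy]

lemma exists_norm_inv_cosh_add_cos_mul_Gamma_le {K : Set ℝ} (hK : IsCompact K)
    (hcos : ∀ k ∈ K, Real.cos (π * k) ≠ -1) (R : ℝ) :
    ∃ M, ∀ k ∈ K, ∀ r : ℝ, |r| ≤ R →
      ‖(((Real.cosh (2 * π * r) : ℂ) + Real.cos (π * k)) *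
        Complex.Gamma (1 / 2 - k / 2 + Complex.I * r) *
        Complex.Gamma (1 / 2 - k / 2 - Complex.I * r))⁻¹‖ ≤ M := by
  have hcont : ContinuousOn (fun p : ℝ × ℝ =>
      (((Real.cosh (2 * π * p.2) + Real.cos (π * p.1) : ℝ) : ℂ))⁻¹ *
        (Complex.Gamma (1 / 2 - p.1 / 2 + Complex.I * p.2))⁻¹ *
        (Complex.Gamma (1 / 2 - p.1 / 2 - Complex.I * p.2))⁻¹) (K ×ˢ Set.Icc (-R) R) := by
    have hΓ := Complex.differentiable_one_div_Gamma.continuous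
    refine (ContinuousOn.mul (ContinuousOn.inv₀ (by fun_prop) fun p hp => ?_)
      (hΓ.comp (by fun_prop)).continuousOn).mul (hΓ.comp (by fun_prop)).continuousOn
    exact Complex.ofReal_ne_zero.2 (cosh_add_cos_pos (hcos p.1 hp.1)).ne'
  obtain ⟨M, hM⟩ := (hK.prod isCompact_Icc).exists_bound_of_continuousOn hcont
  refine ⟨M, fun k hk r hr => ?_⟩
  simpa only [mul_inv, Complex.ofReal_add] using hM (k, r) ⟨hk, abs_le.1 hr⟩

lemma phiHat_eq (k : ℝ) (φ : ℝ → ℝ) (r : ℝ) :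
    phiHat k φ r = (π : ℂ) ^ 2 * Complex.exp (((1 + k) * π / 2 : ℝ) * Complex.I) *
      (∫ u in Set.Ioi (0 : ℝ), besselKernel k (2 * Complex.I * r) u * φ u / u) /
      (Real.sinh (π * r) * (((Real.cosh (2 * π * r) : ℂ) + Real.cos (π * k)) *
        Complex.Gamma (1 / 2 - k / 2 + Complex.I * r) *
        Complex.Gamma (1 / 2 - k / 2 - Complex.I * r))) := by
  have hphase : phaseCos k (2 * Complex.I * r) =
      Complex.cos (k * π / 2 + π * Complex.I * r) := by
    rw [phaseCos]; ring_nf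
  have hphase_neg : phaseCos k (-(2 * Complex.I * r)) =
      Complex.cos (k * π / 2 - π * Complex.I * r) := by
    rw [phaseCos]; ring_nf
  have hexp : (1 + k) * π * Complex.I / 2 = ((1 + k) * π / 2 : ℝ) * Complex.I := by
    push_cast; ring
  simp only [phiHat, besselKernel, hphase, hphase_neg, hexp,
    mul_assoc (Real.sinh (π * r) : ℂ)]

lemma exists_norm_phiHat_le {K : Set ℝ} (hK : IsCompact K)
    (hcos : ∀ k ∈ K, Real.cos (π * k) ≠ -1) (R : ℝ) :
    ∃ C, 0 ≤ C ∧ ∀ k ∈ K, ∀ (φ : ℝ → ℝ) (r : ℝ), r ≠ 0 → |r| ≤ R →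
      IntegrableOn (fun u => (1 + |Real.log (u / 2)|) * |φ u| / u) (Set.Ioi 0) →
      ‖phiHat k φ r‖ ≤ C * ∫ u in Set.Ioi 0, (1 + |Real.log (u / 2)|) * |φ u| / u := by
  obtain ⟨M, hM⟩ := exists_norm_inv_cosh_add_cos_mul_Gamma_le hK hcos R
  obtain ⟨B, hB₀, hB⟩ := exists_norm_integral_besselKernel_le (le_max_left 1 (2 * R))
  refine ⟨2 * π * B * |M|, by positivity, fun k hk φ r hr₀ hr hφ => ?_⟩
  set J : ℝ := ∫ u in Set.Ioi 0, (1 + |Real.log (u / 2)|) * |φ u| / u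
  have hJ₀ : 0 ≤ J := setIntegral_nonneg measurableSet_Ioi fun u (hu : 0 < u) => by positivity
  have norm_order : ‖2 * Complex.I * r‖ = 2 * |r| := by simp
  have integral_le : ‖∫ u in Set.Ioi (0 : ℝ), besselKernel k (2 * Complex.I * r) u * φ u / u‖ ≤
      B * (2 * |r|) * J := by
    rw [← norm_order]
    exact hB k _ φ (by simp) (norm_order.trans_le (le_max_of_le_right (by linarith))) hφ
  have sinh_ge : π * |r| ≤ |Real.sinh (π * r)| := by
    simpa [abs_mul, abs_of_pos pi_pos] using abs_le_abs_sinh (π * r)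
  have : 0 < |r| := abs_pos.2 hr₀
  rw [phiHat_eq, div_eq_mul_inv, mul_inv, norm_mul, norm_mul, norm_mul, norm_mul,
    Complex.norm_exp_ofReal_mul_I, norm_inv, Complex.norm_real, norm_pow, Complex.norm_real,
    Real.norm_of_nonneg pi_pos.le, Real.norm_eq_abs, mul_one]
  calc _ ≤ π ^ 2 * (B * (2 * |r|) * J) * ((π * |r|)⁻¹ * |M|) := by
        gcongr
        exact (hM k hk r hr).trans (le_abs_self M)
    _ = 2 * π * B * |M| * J := by field_simp

end PhiHat

section Support

lemma exists_one_add_abs_log_le_rpow {b t₀ ε : ℝ} (hb : 0 < b) (ht₀ : 0 < t₀) (hε : 0 < ε) :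
    ∃ C, ∀ t v : ℝ, t₀ ≤ t → (b * t)⁻¹ ≤ v → v ≤ b * t → 1 + |Real.log v| ≤ C * t ^ ε := by
  refine ⟨(t₀ ^ ε)⁻¹ + b ^ ε / ε, fun t v ht hv hv' => ?_⟩
  have ht_pos : 0 < t := ht₀.trans_le ht
  have hbt : 0 < b * t := mul_pos hb ht_pos
  have hv_pos : 0 < v := (inv_pos.2 hbt).trans_le hv
  have one_le : 1 ≤ (t₀ ^ ε)⁻¹ * t ^ ε := by
    rw [inv_mul_eq_div, one_le_div (rpow_pos_of_pos ht₀ ε)]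
    gcongr
  have abs_log_le : |Real.log v| ≤ Real.log (b * t) := by
    refine abs_le.2 ⟨?_, Real.log_le_log hv_pos hv'⟩
    rw [← Real.log_inv]
    exact Real.log_le_log (inv_pos.2 hbt) hv
  calc 1 + |Real.log v| ≤ (t₀ ^ ε)⁻¹ * t ^ ε + (b * t) ^ ε / ε :=
        add_le_add one_le (abs_log_le.trans (Real.log_le_rpow_div hbt.le hε))
    _ = ((t₀ ^ ε)⁻¹ + b ^ ε / ε) * t ^ ε := by
        rw [Real.mul_rpow hb.le ht_pos.le]
        ring

lemma exists_one_add_abs_log_half_le {ε c₀ x₀ : ℝ} (hε : 0 < ε) (hc₀ : 0 < c₀) (hx₀ : 0 < x₀) :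
    ∃ C, ∀ a x u : ℝ, c₀ ≤ a → x₀ ≤ x → u ∈ Set.Icc (3 * a / (8 * x)) (3 * a / (2 * x)) →
      1 + |Real.log (u / 2)| ≤ C * (a * x) ^ ε := by
  obtain ⟨C, hC⟩ := exists_one_add_abs_log_le_rpow
    (b := 3 / (4 * x₀ ^ 2) + 16 / (3 * c₀ ^ 2)) (by positivity) (mul_pos hc₀ hx₀) hε
  refine ⟨C, fun a x u ha hx hu => ?_⟩
  have ha_pos : 0 < a := hc₀.trans_le ha
  have hx_pos : 0 < x := hx₀.trans_le hx
  have hlo : 0 < 3 * a / (8 * x) := by positivity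
  refine hC (a * x) (u / 2) (by gcongr) ?_ ?_
  · refine inv_le_of_inv_le₀ (half_pos (hlo.trans_le hu.1)) ?_
    calc (u / 2)⁻¹ ≤ (3 * a / (8 * x) / 2)⁻¹ := by gcongr; exact hu.1
      _ = 16 / (3 * a ^ 2) * (a * x) := by field_simp; norm_num
      _ ≤ (3 / (4 * x₀ ^ 2) + 16 / (3 * c₀ ^ 2)) * (a * x) := by
        gcongr
        exact le_add_of_nonneg_of_le (by positivity) (by gcongr)
  · calc u / 2 ≤ 3 * a / (2 * x) / 2 := by gcongr; exact hu.2
      _ = 3 / (4 * x ^ 2) * (a * x) := by field_simp; norm_num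
      _ ≤ (3 / (4 * x₀ ^ 2) + 16 / (3 * c₀ ^ 2)) * (a * x) := by
        gcongr
        exact le_add_of_le_of_nonneg (by gcongr) (by positivity)

lemma norm_div_le_div_of_le {y u lo L : ℝ} (hlo : 0 < lo) (hy : ‖y‖ ≤ L) (hu : lo ≤ u) :
    ‖y / u‖ ≤ L / lo := by
  rw [norm_div, Real.norm_of_nonneg (hlo.le.trans hu)]
  exact div_le_div₀ ((norm_nonneg y).trans hy) hy hlo hu

lemma integrableOn_div_of_support_Icc {w : ℝ → ℝ} {lo hi L : ℝ} (hw : Measurable w)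
    (hlo : 0 < lo) (hL : ∀ u ∈ Set.Icc lo hi, ‖w u‖ ≤ L)
    (hsupp : ∀ u, u ∉ Set.Icc lo hi → w u = 0) :
    IntegrableOn (fun u => w u / u) (Set.Ioi 0) := by
  have hIcc : IntegrableOn (fun u => w u / u) (Set.Icc lo hi) :=
    .of_bound measure_Icc_lt_top (hw.div measurable_id).aestronglyMeasurable (L / lo)
      ((ae_restrict_iff' measurableSet_Icc).2
        (.of_forall fun u hu => norm_div_le_div_of_le hlo (hL u hu) hu.1))
  exact hIcc.of_forall_sdiff_eq_zero measurableSet_Ioi fun u hu => by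
    rw [hsupp u hu.2, zero_div]

lemma setIntegral_div_le_of_support_Icc {w : ℝ → ℝ} {lo hi L : ℝ} (hlo : 0 < lo)
    (hlohi : lo ≤ hi) (hL : ∀ u ∈ Set.Icc lo hi, ‖w u‖ ≤ L)
    (hsupp : ∀ u, u ∉ Set.Icc lo hi → w u = 0) :
    ∫ u in Set.Ioi 0, w u / u ≤ L / lo * (hi - lo) := by
  have hrestrict : ∫ u in Set.Ioi 0, w u / u = ∫ u in Set.Icc lo hi, w u / u :=
    setIntegral_eq_of_subset_of_forall_sdiff_eq_zero measurableSet_Ioi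
      (fun u hu => hlo.trans_le hu.1) fun u hu => by rw [hsupp u hu.2, zero_div]
  rw [hrestrict, ← Real.volume_real_Icc_of_le hlohi]
  exact (Real.le_norm_self _).trans (norm_setIntegral_le_of_norm_le_const measure_Icc_lt_top
    fun u hu => norm_div_le_div_of_le hlo (hL u hu) hu.1)

end Support

theorem stmt2_general {K : Set ℝ} (hK : IsCompact K) (hcos : ∀ k ∈ K, Real.cos (π * k) ≠ -1)
    {ε c₀ x₀ : ℝ} (hε : 0 < ε) (hc₀ : 0 < c₀) (hx₀ : 0 < x₀) (R : ℝ) :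
    ∃ C : ℝ, ∀ k ∈ K, ∀ (a x : ℝ) (φ : ℝ → ℝ) (r : ℝ), c₀ ≤ a → x₀ ≤ x →
      Measurable φ → (∀ u, |φ u| ≤ 1) →
      (∀ u, u ∉ Set.Icc (3 * a / (8 * x)) (3 * a / (2 * x)) → φ u = 0) →
      r ≠ 0 → |r| ≤ R → ‖phiHat k φ r‖ ≤ C * (a * x) ^ ε := by
  obtain ⟨C, hC₀, hC⟩ := exists_norm_phiHat_le hK hcos R
  obtain ⟨L, hL⟩ := exists_one_add_abs_log_half_le hε hc₀ hx₀
  refine ⟨C * (3 * L), fun k hk a x φ r ha hx hφ_meas hφ_le hφ_supp hr₀ hr => ?_⟩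
  have ha_pos : 0 < a := hc₀.trans_le ha
  have hx_pos : 0 < x := hx₀.trans_le hx
  have hlo : 0 < 3 * a / (8 * x) := by positivity
  have hhi : 3 * a / (2 * x) = 4 * (3 * a / (8 * x)) := by ring
  have weight_le (u : ℝ) (hu : u ∈ Set.Icc (3 * a / (8 * x)) (3 * a / (2 * x))) :
      ‖(1 + |Real.log (u / 2)|) * |φ u|‖ ≤ L * (a * x) ^ ε := by
    rw [Real.norm_of_nonneg (by positivity)]
    exact (mul_le_of_le_one_right (by positivity) (hφ_le u)).trans (hL a x u ha hx hu)
  have weight_supp (u : ℝ) (hu : u ∉ Set.Icc (3 * a / (8 * x)) (3 * a / (2 * x))) :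
      (1 + |Real.log (u / 2)|) * |φ u| = 0 := by
    rw [hφ_supp u hu, abs_zero, mul_zero]
  calc ‖phiHat k φ r‖ ≤ C * ∫ u in Set.Ioi 0, (1 + |Real.log (u / 2)|) * |φ u| / u :=
        hC k hk φ r hr₀ hr
          (integrableOn_div_of_support_Icc (by fun_prop) hlo weight_le weight_supp)
    _ ≤ C * (L * (a * x) ^ ε / (3 * a / (8 * x)) * (3 * a / (2 * x) - 3 * a / (8 * x))) := by
        gcongr
        exact setIntegral_div_le_of_support_Icc hlo (by linarith) weight_le weight_supp
    _ = C * (3 * L) * (a * x) ^ ε := by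
        field_simp
        ring

theorem stmt2 :
    ∀ ε c₀ : ℝ, 0 < ε → 0 < c₀ →
      ∃ C : ℝ, ∀ (k a x : ℝ) (φ : ℝ → ℝ) (r : ℝ),
        (k = 1 / 2 ∨ k = 3 / 2) → c₀ ≤ a → 2 ≤ x →
        Measurable φ → (∀ u, 0 ≤ φ u ∧ φ u ≤ 1) →
        (∀ u, u ∉ Set.Icc (3 * a / (8 * x)) (3 * a / (2 * x)) → φ u = 0) →
        0 < |r| → |r| ≤ 1 →
        ‖phiHat k φ r‖ ≤ C * (a * x) ^ ε := by
  intro ε c₀ hε hc₀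
  have hcos : ∀ k ∈ ({1 / 2, 3 / 2} : Set ℝ), Real.cos (π * k) ≠ -1 := by
    rintro k (rfl | rfl)
    · rw [mul_one_div, Real.cos_pi_div_two]
      norm_num
    · rw [show π * (3 / 2) = π / 2 + π by ring, Real.cos_add_pi, Real.cos_pi_div_two]
      norm_num
  obtain ⟨C, hC⟩ := stmt2_general (Set.toFinite {1 / 2, 3 / 2}).isCompact hcos hε hc₀ two_pos 1
  exact ⟨C, fun k a x φ r hk ha hx hφ_meas hφ hφ_supp hr₀ hr => hC k hk a x φ r ha hx hφ_meas
    (fun u => abs_le.2 ⟨by linarith [(hφ u).1], (hφ u).2⟩) hφ_supp (abs_pos.1 hr₀) hr⟩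
end

section
/- There exists an absolute constant C such that for all a > 0, x > 0, every φ as in the context, and every t ∈ (0, 1/12]: |φ̃(1 + 2t)| ≤ C·(a/x)^{2t} and |φ̃(1 − 2t)| ≤ C·(x/a)^{2t}. Moreover, for every t₀ ∈ (0, 1/12] there is a constant C′ = C′(t₀) such that for every k ∈ {1/2, 3/2} and every t ∈ [t₀, 1/12], |φ̂(it)| ≤ C′·((a/x)^{2t} + (x/a)^{2t}). -/
/-!
Poisson's representation
`J_ν(u) = (u/2)^ν / (√π Γ(ν + 1/2)) ∫₀¹ v^(-1/2) (1 - v)^(ν - 1/2) cos (u √v) dv`,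
obtained by integrating the cosine series term by term against a beta weight, gives for
`Re ν > -1/2` the bound `|J_ν(u)| ≪ (u/2)^(Re ν)` for all `u > 0` at once, small or large, with a
constant continuous in `ν`. On the support of `φ` the quantity `u / (a/x)` stays in a fixed compact
subset of `(0, ∞)`, so `J_{±2t}(u) ≪ (a/x)^{±2t}` there, and the measure `du/u` of the support does
not depend on `a/x`. Finally `φ̂(it)` is a combination of `φ̃(1 ± 2t)` with coefficients which are
bounded for `t` in compact subsets of `(0, 1/4)`, because `1/Γ` is entire.
-/

open Real MeasureTheory

/-- `φ̃(β) := ∫_0^∞ J_{β−1}(u) φ(u) du/u`. -/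
noncomputable def phiTilde (φ : ℝ → ℝ) (β : ℂ) : ℂ :=
  ∫ u in Set.Ioi (0 : ℝ), besselJ (β - 1) u * (φ u : ℂ) / (u : ℂ)

/-- `φ̂(it)` for weight `k` and real `t ∈ (0, 1/4)`. -/
noncomputable def phiHatIt (k : ℝ) (φ : ℝ → ℝ) (t : ℝ) : ℂ :=
  (π : ℂ) ^ 2 * Complex.exp ((1 + (k : ℂ)) * (π : ℂ) * Complex.I / 2) *
    ((Real.cos (k * π / 2 - π * t) : ℂ) * phiTilde φ (1 - 2 * (t : ℂ)) -
      (Real.cos (k * π / 2 + π * t) : ℂ) * phiTilde φ (1 + 2 * (t : ℂ))) /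
    (Complex.I * (Real.sin (π * t) : ℂ) * (Real.cos (2 * π * t) : ℂ) *
      Complex.Gamma (1 / 2 - (k : ℂ) / 2 - (t : ℂ)) *
      Complex.Gamma (1 / 2 - (k : ℂ) / 2 + (t : ℂ)))

/-- The integrand of Euler's beta integral `Complex.betaIntegral p q`. -/
noncomputable def betaIntegrand (p q : ℂ) (v : ℝ) : ℂ :=
  (v : ℂ) ^ (p - 1) * (1 - (v : ℂ)) ^ (q - 1)

@[fun_prop]
theorem measurable_betaIntegrand (p q : ℂ) : Measurable (betaIntegrand p q) := by
  unfold betaIntegrand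
  fun_prop

theorem integral_betaIntegrand_mul_pow (p q : ℂ) (j : ℕ) :
    ∫ v in (0 : ℝ)..1, betaIntegrand p q v * (v : ℂ) ^ j = Complex.betaIntegral (p + j) q := by
  rw [Complex.betaIntegral]
  refine intervalIntegral.integral_congr_uIoo fun v hv ↦ ?_
  rw [Set.uIoo_of_le zero_le_one] at hv
  have hv₀ : (v : ℂ) ≠ 0 := by exact_mod_cast hv.1.ne'
  rw [betaIntegrand, add_sub_right_comm, Complex.cpow_add _ _ hv₀, Complex.cpow_natCast]
  ring

theorem integral_norm_betaIntegrand_s3 {p q : ℂ} (hp : 0 < p.re) (hq : 0 < q.re) :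
    ∫ v in (0 : ℝ)..1, ‖betaIntegrand p q v‖ = ProbabilityTheory.beta p.re q.re := by
  apply Complex.ofReal_injective
  rw [← intervalIntegral.integral_ofReal]
  calc ∫ v in (0 : ℝ)..1, (‖betaIntegrand p q v‖ : ℂ)
      = Complex.betaIntegral p.re q.re := by
        refine intervalIntegral.integral_congr_uIoo fun v hv ↦ ?_
        rw [Set.uIoo_of_le zero_le_one] at hv
        have hv₁ : 0 < 1 - v := sub_pos.2 hv.2
        rw [betaIntegrand, ← Complex.ofReal_one, ← Complex.ofReal_sub, norm_mul,
          Complex.norm_cpow_eq_rpow_re_of_pos hv.1, Complex.norm_cpow_eq_rpow_re_of_pos hv₁,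
          Complex.ofReal_mul, Complex.ofReal_cpow hv.1.le, Complex.ofReal_cpow hv₁.le]
        push_cast [Complex.sub_re, Complex.one_re]
        rfl
    _ = ProbabilityTheory.beta p.re q.re := by
        rw [Complex.betaIntegral_eq_Gamma_mul_div _ _ (by simpa) (by simpa), ← Complex.ofReal_add,
          Complex.Gamma_ofReal, Complex.Gamma_ofReal, Complex.Gamma_ofReal]
        simp only [ProbabilityTheory.beta, Complex.ofReal_mul, Complex.ofReal_div]

theorem norm_mul_sqrt_pow_le {v : ℝ} (hv : v ≤ 1) (u : ℝ) (n : ℕ) :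
    ‖(u * √v) ^ n‖ ≤ |u| ^ n := by
  rw [norm_pow, norm_mul, Real.norm_eq_abs, Real.norm_of_nonneg (Real.sqrt_nonneg v)]
  gcongr
  exact mul_le_of_le_one_right (abs_nonneg u) (Real.sqrt_le_one.2 hv)

theorem hasSum_integral_betaIntegrand_mul_cos {p q : ℂ} (hp : 0 < p.re) (hq : 0 < q.re) (u : ℝ) :
    HasSum (fun j : ℕ ↦ (-1 : ℂ) ^ j * (u : ℂ) ^ (2 * j) / ((2 * j).factorial : ℂ) *
        Complex.betaIntegral (p + j) q)
      (∫ v in (0 : ℝ)..1, betaIntegrand p q v * (Real.cos (u * √v) : ℂ)) := by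
  have hmoment (j : ℕ) :
      ∫ v in (0 : ℝ)..1, betaIntegrand p q v *
          (((-1) ^ j * (u * √v) ^ (2 * j) / ((2 * j).factorial : ℝ) : ℝ) : ℂ) =
        (-1 : ℂ) ^ j * (u : ℂ) ^ (2 * j) / ((2 * j).factorial : ℂ) *
          Complex.betaIntegral (p + j) q := by
    rw [← integral_betaIntegrand_mul_pow, ← intervalIntegral.integral_const_mul]
    refine intervalIntegral.integral_congr_uIoo fun v hv ↦ ?_
    rw [Set.uIoo_of_le zero_le_one] at hv
    rw [mul_pow, pow_mul √v, Real.sq_sqrt hv.1.le]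
    push_cast
    ring
  simp_rw [← hmoment]
  refine intervalIntegral.hasSum_integral_of_dominated_convergence
    (fun j v ↦ ‖betaIntegrand p q v‖ * (|u| ^ (2 * j) / ((2 * j).factorial : ℝ)))
    (fun j ↦ by fun_prop) (fun j ↦ ?_) ?_ ?_ ?_
  · refine ae_of_all _ fun v hv ↦ ?_
    rw [Set.uIoc_of_le zero_le_one] at hv
    rw [norm_mul, Complex.norm_real, norm_div, norm_mul, norm_pow, norm_neg, norm_one, one_pow,
      one_mul, Real.norm_natCast]
    gcongr
    exact norm_mul_sqrt_pow_le hv.2 u (2 * j)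
  · exact ae_of_all _ fun v _ ↦ (Real.hasSum_cosh |u|).summable.mul_left _
  · simp_rw [tsum_mul_left]
    exact (Complex.betaIntegral_convergent hp hq).norm.mul_const _
  · exact ae_of_all _ fun v _ ↦ (Complex.hasSum_ofReal.2 (Real.hasSum_cos _)).mul_left _

/-- The integral `∫₀¹ v^(-1/2) (1 - v)^(ν - 1/2) cos (u √v) dv` in Poisson's representation
of `J_ν(u)`. The variable `v` is the square of the usual one, so that the moments of the weight
are values of the beta function. -/
noncomputable def poissonIntegral (ν : ℂ) (u : ℝ) : ℂ :=
  ∫ v in (0 : ℝ)..1, betaIntegrand (1 / 2) (ν + 1 / 2) v * (Real.cos (u * √v) : ℂ)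

theorem norm_poissonIntegral_le {ν : ℂ} (hν : -(1 / 2) < ν.re) (u : ℝ) :
    ‖poissonIntegral ν u‖ ≤ ProbabilityTheory.beta (1 / 2) (ν.re + 1 / 2) := by
  have hp : 0 < (1 / 2 : ℂ).re := by norm_num
  have hq : 0 < (ν + 1 / 2).re := by norm_num; linarith
  calc ‖poissonIntegral ν u‖
      ≤ ∫ v in (0 : ℝ)..1, ‖betaIntegrand (1 / 2) (ν + 1 / 2) v‖ := by
        refine intervalIntegral.norm_integral_le_of_norm_le zero_le_one
          (ae_of_all _ fun v _ ↦ ?_) (Complex.betaIntegral_convergent hp hq).norm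
        rw [norm_mul, Complex.norm_real]
        exact mul_le_of_le_one_right (norm_nonneg _) (Real.abs_cos_le_one _)
    _ = ProbabilityTheory.beta (1 / 2) (ν.re + 1 / 2) := by
        rw [integral_norm_betaIntegrand_s3 hp hq]
        norm_num

theorem Gamma_one_half_add_nat (j : ℕ) :
    Complex.Gamma (1 / 2 + j) =
      ((2 * j).factorial : ℂ) * (√π : ℂ) / (2 ^ (2 * j) * (j.factorial : ℂ)) := by
  have hfact : (j.factorial : ℂ) ≠ 0 := Nat.cast_ne_zero.2 j.factorial_ne_zero
  have hdup := Complex.Gamma_mul_Gamma_add_half (1 / 2 + j)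
  rw [show (1 / 2 + j + 1 / 2 : ℂ) = j + 1 by ring, Complex.Gamma_nat_eq_factorial,
    show (2 * (1 / 2 + j) : ℂ) = (2 * j : ℕ) + 1 by push_cast; ring,
    Complex.Gamma_nat_eq_factorial,
    show (1 - ((2 * j : ℕ) + 1) : ℂ) = -((2 * j : ℕ) : ℂ) by ring, Complex.cpow_neg,
    Complex.cpow_natCast] at hdup
  rw [← div_div, eq_div_iff hfact, hdup]
  ring

theorem besselJ_eq_poissonIntegral {ν : ℂ} (hν : -(1 / 2) < ν.re) {u : ℝ} (hu : 0 < u) :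
    besselJ ν u =
      ((u / 2 : ℝ) : ℂ) ^ ν / (√π * Complex.Gamma (ν + 1 / 2)) * poissonIntegral ν u := by
  have hp : 0 < (1 / 2 : ℂ).re := by norm_num
  have hq : 0 < (ν + 1 / 2).re := by norm_num; linarith
  have hu₂ : ((u / 2 : ℝ) : ℂ) ≠ 0 := by exact_mod_cast (half_pos hu).ne'
  refine HasSum.tsum_eq ?_
  convert! (hasSum_integral_betaIntegrand_mul_cos hp hq u).mul_left
    (((u / 2 : ℝ) : ℂ) ^ ν / (√π * Complex.Gamma (ν + 1 / 2))) using 2 with j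
  have hpow : Complex.exp ((2 * (j : ℂ) + ν) * (Real.log (u / 2) : ℂ)) =
      ((u / 2 : ℝ) : ℂ) ^ (2 * j) * ((u / 2 : ℝ) : ℂ) ^ ν := by
    rw [← Complex.cpow_natCast, ← Complex.cpow_add _ _ hu₂, Complex.cpow_def_of_ne_zero hu₂,
      Complex.ofReal_log (half_pos hu).le, mul_comm]
    push_cast
    rfl
  have hpj : 0 < (1 / 2 + j : ℂ).re := by norm_num; positivity
  rw [hpow, Complex.betaIntegral_eq_Gamma_mul_div _ _ hpj hq,
    show (1 / 2 + j + (ν + 1 / 2) : ℂ) = j + 1 + ν by ring,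
    Gamma_one_half_add_nat]
  have hΓ := Complex.Gamma_ne_zero_of_re_pos hq
  have hπ : (√π : ℂ) ≠ 0 := by exact_mod_cast (Real.sqrt_pos.2 Real.pi_pos).ne'
  have hfact : ((2 * j).factorial : ℂ) ≠ 0 := Nat.cast_ne_zero.2 (2 * j).factorial_ne_zero
  generalize Complex.Gamma (ν + 1 / 2) = G at hΓ ⊢
  push_cast
  rw [div_pow]
  field_simp

/-- The factor `B(1/2, Re ν + 1/2) / (√π |Γ(ν + 1/2)|)` in front of `(u/2)^(Re ν)` in the bound for
`|J_ν(u)|` that follows from Poisson's representation. It equals `1 / Γ(ν + 1)` for real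
`ν > -1/2`. -/
noncomputable def besselJBound (ν : ℂ) : ℝ :=
  ProbabilityTheory.beta (1 / 2) (ν.re + 1 / 2) / (√π * ‖Complex.Gamma (ν + 1 / 2)‖)

theorem norm_besselJ_le {ν : ℂ} (hν : -(1 / 2) < ν.re) {u : ℝ} (hu : 0 < u) :
    ‖besselJ ν u‖ ≤ besselJBound ν * (u / 2) ^ ν.re := by
  rw [besselJ_eq_poissonIntegral hν hu, norm_mul, norm_div, norm_mul,
    Complex.norm_cpow_eq_rpow_re_of_pos (half_pos hu), Complex.norm_real,
    Real.norm_of_nonneg (Real.sqrt_nonneg π), besselJBound, div_mul_comm, div_mul_eq_mul_div,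
    div_mul_eq_mul_div]
  gcongr
  exact norm_poissonIntegral_le hν u

theorem continuousAt_beta {p q : ℝ} (hp : 0 < p) (hq : 0 < q) :
    ContinuousAt (ProbabilityTheory.beta p) q := by
  have hΓ {s : ℝ} (hs : 0 < s) : ContinuousAt Real.Gamma s :=
    Real.differentiableOn_Gamma_Ioi.continuousOn.continuousAt (Ioi_mem_nhds hs)
  have hsum : ContinuousAt (fun s ↦ Real.Gamma (p + s)) q :=
    ContinuousAt.comp' (hΓ (add_pos hp hq)) (by fun_prop)
  exact (continuousAt_const.mul (hΓ hq)).div hsum (Real.Gamma_pos_of_pos (add_pos hp hq)).ne'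

theorem continuousAt_besselJBound {ν : ℂ} (hν : -(1 / 2) < ν.re) :
    ContinuousAt besselJBound ν := by
  have hbeta : ContinuousAt (fun μ : ℂ ↦ ProbabilityTheory.beta (1 / 2) (μ.re + 1 / 2)) ν :=
    (continuousAt_beta one_half_pos (by linarith)).comp' (by fun_prop)
  have hΓ : Continuous fun μ : ℂ ↦ (Complex.Gamma (μ + 1 / 2))⁻¹ :=
    Complex.differentiable_one_div_Gamma.continuous.comp (by fun_prop)
  unfold besselJBound
  simp only [div_eq_mul_inv _ (_ * _), mul_inv, ← norm_inv]
  exact hbeta.mul (continuous_const.mul hΓ.norm).continuousAt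

theorem exists_norm_besselJ_le {S : Set ℂ} (hS : IsCompact S) (hre : ∀ ν ∈ S, -(1 / 2) < ν.re)
    {b : ℝ} (hb : 0 < b) (c : ℝ) :
    ∃ M : ℝ, ∀ ν ∈ S, ∀ y > 0, ∀ u ∈ Set.Icc (b * y) (c * y), ‖besselJ ν u‖ ≤ M * y ^ ν.re := by
  have hbound : ContinuousOn (fun p : ℂ × ℝ ↦ besselJBound p.1) (S ×ˢ Set.Icc b c) :=
    fun p hp ↦ ((continuousAt_besselJBound (hre p.1 hp.1)).comp'
      continuousAt_fst).continuousWithinAt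
  have hpow : ContinuousOn (fun p : ℂ × ℝ ↦ (p.2 / 2) ^ p.1.re) (S ×ˢ Set.Icc b c) :=
    ContinuousOn.rpow (by fun_prop) (by fun_prop) fun p hp ↦
      Or.inl (half_pos (hb.trans_le hp.2.1)).ne'
  obtain ⟨M, hM⟩ := (hS.prod isCompact_Icc).exists_bound_of_continuousOn (hbound.mul hpow)
  refine ⟨M, fun ν hν y hy u hu ↦ ?_⟩
  have hw : u / y ∈ Set.Icc b c := ⟨(le_div_iff₀ hy).2 hu.1, (div_le_iff₀ hy).2 hu.2⟩
  have hw₀ : 0 < u / y := hb.trans_le hw.1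
  have hu₀ : 0 < u := (mul_pos hb hy).trans_le hu.1
  calc ‖besselJ ν u‖ ≤ besselJBound ν * (u / 2) ^ ν.re := norm_besselJ_le (hre ν hν) hu₀
    _ = besselJBound ν * (u / y / 2) ^ ν.re * y ^ ν.re := by
        rw [mul_assoc, ← Real.mul_rpow (half_pos hw₀).le hy.le]
        field_simp
    _ ≤ M * y ^ ν.re := by
        gcongr
        exact (Real.le_norm_self _).trans (hM (ν, u / y) ⟨hν, hw⟩)

theorem norm_phiTilde_le {α γ M : ℝ} (hα : 0 < α) (hαγ : α ≤ γ) {φ : ℝ → ℝ}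
    (hφ : ∀ u, |φ u| ≤ 1) (hsupp : ∀ u, u ∉ Set.Icc α γ → φ u = 0) {β : ℂ}
    (hM : ∀ u ∈ Set.Icc α γ, ‖besselJ (β - 1) u‖ ≤ M) :
    ‖phiTilde φ β‖ ≤ M * Real.log (γ / α) := by
  have hpos {u : ℝ} (hu : u ∈ Set.Icc α γ) : 0 < u := hα.trans_le hu.1
  have hrestrict : phiTilde φ β = ∫ u in α..γ, besselJ (β - 1) u * (φ u : ℂ) / (u : ℂ) := by
    rw [phiTilde, intervalIntegral.integral_of_le hαγ, ← integral_Icc_eq_integral_Ioc]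
    refine setIntegral_eq_of_subset_of_forall_sdiff_eq_zero measurableSet_Ioi
      (fun u hu ↦ hpos hu) fun u hu ↦ ?_
    rw [hsupp u hu.2, Complex.ofReal_zero, mul_zero, zero_div]
  have hinv : IntervalIntegrable (fun u : ℝ ↦ u⁻¹) volume α γ :=
    intervalIntegrable_inv_iff.2 (Or.inr (Set.notMem_uIcc_of_lt hα (hα.trans_le hαγ)))
  rw [hrestrict, ← integral_inv_of_pos hα (hα.trans_le hαγ), ← intervalIntegral.integral_const_mul]
  refine intervalIntegral.norm_integral_le_of_norm_le hαγ (ae_of_all _ fun u hu ↦ ?_)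
    (hinv.const_mul M)
  have hu' := Set.Ioc_subset_Icc_self hu
  rw [norm_div, norm_mul, Complex.norm_real, Complex.norm_real, Real.norm_of_nonneg (hpos hu').le,
    div_eq_mul_inv]
  gcongr
  · exact inv_nonneg.2 (hpos hu').le
  · exact (mul_le_of_le_one_right (norm_nonneg _) (hφ u)).trans (hM u hu')

theorem exists_norm_phiTilde_le {S : Set ℂ} (hS : IsCompact S) (hre : ∀ ν ∈ S, -(1 / 2) < ν.re)
    {b c : ℝ} (hb : 0 < b) (hbc : b ≤ c) :
    ∃ C : ℝ, ∀ ν ∈ S, ∀ y > 0, ∀ φ : ℝ → ℝ, (∀ u, |φ u| ≤ 1) →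
      (∀ u, u ∉ Set.Icc (b * y) (c * y) → φ u = 0) → ‖phiTilde φ (1 + ν)‖ ≤ C * y ^ ν.re := by
  obtain ⟨M, hM⟩ := exists_norm_besselJ_le hS hre hb c
  refine ⟨M * Real.log (c / b), fun ν hν y hy φ hφ hsupp ↦ ?_⟩
  have hbound : ∀ u ∈ Set.Icc (b * y) (c * y), ‖besselJ (1 + ν - 1) u‖ ≤ M * y ^ ν.re := by
    rw [add_sub_cancel_left]
    exact hM ν hν y hy
  calc ‖phiTilde φ (1 + ν)‖ ≤ M * y ^ ν.re * Real.log (c * y / (b * y)) :=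
        norm_phiTilde_le (mul_pos hb hy) (by gcongr) hφ hsupp hbound
    _ = M * Real.log (c / b) * y ^ ν.re := by
        rw [mul_div_mul_right _ _ hy.ne']
        ring

/-- The factor of `φ̂(it)` that does not depend on `φ`, that is, everything but the bracket
`cos(kπ/2 − πt) φ̃(1 − 2t) − cos(kπ/2 + πt) φ̃(1 + 2t)`. -/
noncomputable def phiHatPrefactor (k t : ℝ) : ℂ :=
  (π : ℂ) ^ 2 * Complex.exp ((1 + (k : ℂ)) * (π : ℂ) * Complex.I / 2) /
    (Complex.I * (Real.sin (π * t) : ℂ) * (Real.cos (2 * π * t) : ℂ) *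
      Complex.Gamma (1 / 2 - (k : ℂ) / 2 - (t : ℂ)) *
      Complex.Gamma (1 / 2 - (k : ℂ) / 2 + (t : ℂ)))

-- This includes the poles of the Gamma factors: there the junk values `Γ = 0` and `0⁻¹ = 0` agree
-- with the value of the entire function `1/Γ`.
theorem continuousOn_phiHatPrefactor :
    ContinuousOn (fun p : ℝ × ℝ ↦ phiHatPrefactor p.1 p.2) (Set.univ ×ˢ Set.Ioo 0 (1 / 4)) := by
  have htrig : ∀ p ∈ (Set.univ : Set ℝ) ×ˢ Set.Ioo (0 : ℝ) (1 / 4),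
      Complex.I * (Real.sin (π * p.2) : ℂ) * (Real.cos (2 * π * p.2) : ℂ) ≠ 0 := by
    rintro ⟨k, t⟩ ⟨-, ht₀ : 0 < t, ht : t < 1 / 4⟩
    have hsin : 0 < Real.sin (π * t) :=
      Real.sin_pos_of_pos_of_lt_pi (by positivity) (by nlinarith [Real.pi_pos])
    have hcos : 0 < Real.cos (2 * π * t) :=
      Real.cos_pos_of_mem_Ioo ⟨by linarith [mul_pos Real.pi_pos ht₀, Real.pi_pos], by
        nlinarith [Real.pi_pos]⟩
    simp [Complex.I_ne_zero, hsin.ne', hcos.ne', -Complex.ofReal_sin, -Complex.ofReal_cos]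
  have hΓ₁ : Continuous fun p : ℝ × ℝ ↦ (Complex.Gamma (1 / 2 - (p.1 : ℂ) / 2 - (p.2 : ℂ)))⁻¹ :=
    Complex.differentiable_one_div_Gamma.continuous.comp (by fun_prop)
  have hΓ₂ : Continuous fun p : ℝ × ℝ ↦ (Complex.Gamma (1 / 2 - (p.1 : ℂ) / 2 + (p.2 : ℂ)))⁻¹ :=
    Complex.differentiable_one_div_Gamma.continuous.comp (by fun_prop)
  simp only [phiHatPrefactor, div_eq_mul_inv _ (_ * _), mul_inv (_ * Complex.Gamma _),
    mul_inv _ (Complex.Gamma _)]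
  exact ContinuousOn.mul (by fun_prop) (ContinuousOn.mul (ContinuousOn.mul
    (ContinuousOn.inv₀ (by fun_prop) htrig) hΓ₁.continuousOn) hΓ₂.continuousOn)

theorem norm_phiHatIt_le (k t : ℝ) (φ : ℝ → ℝ) :
    ‖phiHatIt k φ t‖ ≤ ‖phiHatPrefactor k t‖ *
      (‖phiTilde φ (1 + 2 * (t : ℂ))‖ + ‖phiTilde φ (1 - 2 * (t : ℂ))‖) := by
  have hcos (θ : ℝ) (z : ℂ) : ‖(Real.cos θ : ℂ) * z‖ ≤ ‖z‖ := by
    rw [norm_mul, Complex.norm_real]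
    exact mul_le_of_le_one_left (norm_nonneg z) (Real.abs_cos_le_one θ)
  rw [phiHatIt, mul_div_right_comm, norm_mul, add_comm ‖phiTilde φ (1 + 2 * (t : ℂ))‖]
  exact mul_le_mul_of_nonneg_left
    ((norm_sub_le _ _).trans (add_le_add (hcos _ _) (hcos _ _))) (norm_nonneg (phiHatPrefactor k t))

theorem exists_norm_phiTilde_one_add_le_and_one_sub_le {b c t₁ : ℝ} (hb : 0 < b) (hbc : b ≤ c)
    (ht₁ : t₁ < 1 / 4) :
    ∃ C : ℝ, ∀ (y t : ℝ) (φ : ℝ → ℝ), 0 < y → (∀ u, |φ u| ≤ 1) →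
      (∀ u, u ∉ Set.Icc (b * y) (c * y) → φ u = 0) → 0 < t → t ≤ t₁ →
      ‖phiTilde φ (1 + 2 * (t : ℂ))‖ ≤ C * y ^ (2 * t) ∧
      ‖phiTilde φ (1 - 2 * (t : ℂ))‖ ≤ C * y⁻¹ ^ (2 * t) := by
  obtain ⟨C, hC⟩ := exists_norm_phiTilde_le (S := Complex.ofReal '' Set.Icc (-(2 * t₁)) (2 * t₁))
    (isCompact_Icc.image Complex.continuous_ofReal)
    (by rintro _ ⟨s, hs, rfl⟩; rw [Complex.ofReal_re]; linarith [hs.1]) hb hbc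
  refine ⟨C, fun y t φ hy hφ hsupp ht₀ ht ↦ ⟨?_, ?_⟩⟩
  · have h := hC _ ⟨2 * t, ⟨by linarith, by linarith⟩, rfl⟩ y hy φ hφ hsupp
    rwa [Complex.ofReal_re, Complex.ofReal_mul, Complex.ofReal_ofNat] at h
  · have h := hC _ ⟨-(2 * t), ⟨by linarith, by linarith⟩, rfl⟩ y hy φ hφ hsupp
    rwa [Complex.ofReal_re, Complex.ofReal_neg, Complex.ofReal_mul, Complex.ofReal_ofNat,
      ← sub_eq_add_neg, Real.rpow_neg hy.le, ← Real.inv_rpow hy.le] at h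

theorem stmt3_general {b c t₁ : ℝ} (hb : 0 < b) (hbc : b ≤ c) (ht₁ : t₁ < 1 / 4) {K : Set ℝ}
    (hK : IsCompact K) :
    (∃ C : ℝ, ∀ (a x : ℝ) (φ : ℝ → ℝ) (t : ℝ), 0 < a → 0 < x →
      Measurable φ → (∀ u, |φ u| ≤ 1) →
      (∀ u, u ∉ Set.Icc (b * (a / x)) (c * (a / x)) → φ u = 0) →
      0 < t → t ≤ t₁ →
      ‖phiTilde φ (1 + 2 * (t : ℂ))‖ ≤ C * (a / x) ^ (2 * t) ∧
      ‖phiTilde φ (1 - 2 * (t : ℂ))‖ ≤ C * (x / a) ^ (2 * t)) ∧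
    (∀ t₀ : ℝ, 0 < t₀ →
      ∃ C' : ℝ, ∀ (k a x : ℝ) (φ : ℝ → ℝ) (t : ℝ),
        k ∈ K → 0 < a → 0 < x →
        Measurable φ → (∀ u, |φ u| ≤ 1) →
        (∀ u, u ∉ Set.Icc (b * (a / x)) (c * (a / x)) → φ u = 0) →
        t₀ ≤ t → t ≤ t₁ →
        ‖phiHatIt k φ t‖ ≤ C' * ((a / x) ^ (2 * t) + (x / a) ^ (2 * t))) := by
  obtain ⟨C, hC⟩ := exists_norm_phiTilde_one_add_le_and_one_sub_le hb hbc ht₁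
  refine ⟨⟨C, fun a x φ t ha hx _ hφ hsupp ht₀ ht ↦ ?_⟩, fun t₀ ht₀ ↦ ?_⟩
  · simpa only [inv_div] using hC (a / x) t φ (div_pos ha hx) hφ hsupp ht₀ ht
  obtain ⟨D, hD⟩ := (hK.prod (isCompact_Icc (a := t₀) (b := t₁))).exists_bound_of_continuousOn
    (continuousOn_phiHatPrefactor.mono
      (Set.prod_mono (Set.subset_univ K) (Set.Icc_subset_Ioo ht₀ ht₁)))
  refine ⟨D * C, fun k a x φ t hk ha hx _ hφ hsupp hlo hhi ↦ ?_⟩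
  obtain ⟨hadd, hsub⟩ := hC (a / x) t φ (div_pos ha hx) hφ hsupp (ht₀.trans_le hlo) hhi
  rw [inv_div] at hsub
  have hprefactor : ‖phiHatPrefactor k t‖ ≤ D := hD (k, t) ⟨hk, hlo, hhi⟩
  calc ‖phiHatIt k φ t‖
      ≤ ‖phiHatPrefactor k t‖ *
          (‖phiTilde φ (1 + 2 * (t : ℂ))‖ + ‖phiTilde φ (1 - 2 * (t : ℂ))‖) :=
        norm_phiHatIt_le k t φ
    _ ≤ D * (C * (a / x) ^ (2 * t) + C * (x / a) ^ (2 * t)) :=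
        mul_le_mul hprefactor (add_le_add hadd hsub) (by positivity)
          ((norm_nonneg _).trans hprefactor)
    _ = D * C * ((a / x) ^ (2 * t) + (x / a) ^ (2 * t)) := by ring

theorem stmt3 :
    (∃ C : ℝ, ∀ (a x : ℝ) (φ : ℝ → ℝ) (t : ℝ), 0 < a → 0 < x →
      Measurable φ → (∀ u, 0 ≤ φ u ∧ φ u ≤ 1) →
      (∀ u, u ∉ Set.Icc (3 * a / (8 * x)) (3 * a / (2 * x)) → φ u = 0) →
      0 < t → t ≤ 1 / 12 →
      ‖phiTilde φ (1 + 2 * (t : ℂ))‖ ≤ C * (a / x) ^ (2 * t) ∧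
      ‖phiTilde φ (1 - 2 * (t : ℂ))‖ ≤ C * (x / a) ^ (2 * t)) ∧
    (∀ t₀ : ℝ, 0 < t₀ → t₀ ≤ 1 / 12 →
      ∃ C' : ℝ, ∀ (k a x : ℝ) (φ : ℝ → ℝ) (t : ℝ),
        (k = 1 / 2 ∨ k = 3 / 2) → 0 < a → 0 < x →
        Measurable φ → (∀ u, 0 ≤ φ u ∧ φ u ≤ 1) →
        (∀ u, u ∉ Set.Icc (3 * a / (8 * x)) (3 * a / (2 * x)) → φ u = 0) →
        t₀ ≤ t → t ≤ 1 / 12 →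
        ‖phiHatIt k φ t‖ ≤ C' * ((a / x) ^ (2 * t) + (x / a) ^ (2 * t))) := by
  obtain ⟨⟨C, hC⟩, hgen⟩ := stmt3_general (b := 3 / 8) (c := 3 / 2) (t₁ := 1 / 12) (by norm_num)
    (by norm_num) (by norm_num) (Set.toFinite {1 / 2, 3 / 2}).isCompact
  simp only [mul_div_mul_comm]
  have habs {φ : ℝ → ℝ} (hφ : ∀ u, 0 ≤ φ u ∧ φ u ≤ 1) (u : ℝ) : |φ u| ≤ 1 :=
    (abs_of_nonneg (hφ u).1).trans_le (hφ u).2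
  exact ⟨⟨C, fun a x φ t ha hx hm hφ ↦ hC a x φ t ha hx hm (habs hφ)⟩, fun t₀ ht₀ _ ↦
    (hgen t₀ ht₀).imp fun C' hC' k a x φ t hk ha hx hm hφ ↦ hC' k a x φ t hk ha hx hm (habs hφ)⟩
end

section
/- There exists an absolute constant C such that for all a > 0, x > 0 and every φ as in the context: |φ̃(3/2)| ≤ C·(a/x)^{1/2}, |φ̃(1/2)| ≤ C·(x/a)^{1/2}, and |φ̂(i/4)| ≤ C·(x/a)^{1/2} when k = 1/2, while |φ̂(i/4)| ≤ C·(a/x)^{1/2} when k = 3/2. -/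
open Real MeasureTheory

/-- `φ̂(i/4)` in weight `k = 1/2`. -/
noncomputable def phiHatQuarterHalf (φ : ℝ → ℝ) : ℂ :=
  Complex.exp ((π : ℂ) * Complex.I / 4) *
    Complex.ofReal (∫ u in Set.Ioi (0 : ℝ), Real.cos u * φ u * u ^ (-(3 : ℝ) / 2))

/-- `φ̂(i/4)` in weight `k = 3/2`. -/
noncomputable def phiHatQuarterThreeHalf (φ : ℝ → ℝ) : ℂ :=
  (1 / 2 : ℂ) * Complex.exp (3 * (π : ℂ) * Complex.I / 4) *
    Complex.ofReal (∫ u in Set.Ioi (0 : ℝ), Real.sin u * φ u * u ^ (-(3 : ℝ) / 2))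

/-!
At half-integral order the Bessel function is elementary: by the duplication formula for `Γ`,
`J_{1/2}(u) = √(2 / (π u)) sin u` and `J_{-1/2}(u) = √(2 / (π u)) cos u`. Hence all four integrands
are `φ` times a kernel bounded by `u ^ s`, with `s = -1/2` when the sine is present
(through `|sin u| ≤ u`) and `s = -3/2` when the cosine is. As `φ` lives on an interval whose
endpoints and length are comparable to `a / x`, the integrals are `O((a / x) ^ (s + 1))`.
-/

section HalfIntegralOrder

lemma factorial_mul_Gamma_add_half (j : ℕ) :
    (j.factorial : ℂ) * Complex.Gamma (j + 1 / 2) = (2 * j).factorial / 2 ^ (2 * j) * √π := by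
  have duplication := Complex.Gamma_mul_Gamma_add_half ((j : ℂ) + 1 / 2)
  have h_double : 2 * ((j : ℂ) + 1 / 2) = ((2 * j : ℕ) : ℂ) + 1 := by push_cast; ring
  rw [h_double, show (1 : ℂ) - (((2 * j : ℕ) : ℂ) + 1) = -((2 * j : ℕ) : ℂ) by ring,
    add_assoc, add_halves, Complex.Gamma_nat_eq_factorial, Complex.Gamma_nat_eq_factorial,
    Complex.cpow_neg, Complex.cpow_natCast] at duplication
  rw [mul_comm, duplication, div_eq_mul_inv]

lemma factorial_mul_Gamma_add_three_halves (j : ℕ) :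
    (j.factorial : ℂ) * Complex.Gamma (j + 3 / 2) =
      (2 * j + 1).factorial / 2 ^ (2 * j + 1) * √π := by
  have h_ne : (j : ℂ) + 1 / 2 ≠ 0 := by
    simpa using Complex.ofReal_ne_zero.2 (by positivity : (j : ℝ) + 1 / 2 ≠ 0)
  rw [show (j : ℂ) + 3 / 2 = (j + 1 / 2) + 1 by ring, Complex.Gamma_add_one _ h_ne,
    mul_left_comm, factorial_mul_Gamma_add_half, Nat.factorial_succ]
  push_cast
  field_simp
  ring

lemma cexp_natCast_sub_half_mul_log {t : ℝ} (ht : 0 < t) (n : ℕ) :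
    Complex.exp (((n : ℂ) - 1 / 2) * Real.log t) = ((t ^ n / √t : ℝ) : ℂ) := by
  have h_real : ((n : ℂ) - 1 / 2) * Real.log t = ((n * Real.log t - Real.log t / 2 : ℝ) : ℂ) := by
    push_cast; ring
  rw [h_real, ← Complex.ofReal_exp, Real.exp_sub, ← Real.log_sqrt ht.le,
    Real.exp_log (Real.sqrt_pos.2 ht), Real.exp_nat_mul, Real.exp_log ht]

lemma sqrt_two_div_pi_mul (u : ℝ) : √(2 / (π * u)) = 1 / (√π * √(u / 2)) := by
  rw [← Real.sqrt_mul pi_pos.le, one_div, ← Real.sqrt_inv]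
  congr 1
  ring

lemma besselJ_one_half {u : ℝ} (hu : 0 < u) :
    besselJ (1 / 2) u = ((√(2 / (π * u)) * Real.sin u : ℝ) : ℂ) := by
  refine HasSum.tsum_eq ?_
  convert Complex.hasSum_ofReal.2 ((Real.hasSum_sin u).mul_left √(2 / (π * u))) using 2 with j
  have h_half : 0 < u / 2 := half_pos hu
  have h_exp : (2 * (j : ℂ) + 1 / 2) = ((2 * j + 1 : ℕ) : ℂ) - 1 / 2 := by push_cast; ring
  rw [show (j : ℂ) + 1 + 1 / 2 = j + 3 / 2 by ring, factorial_mul_Gamma_add_three_halves, h_exp,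
    cexp_natCast_sub_half_mul_log h_half, sqrt_two_div_pi_mul u]
  push_cast
  rw [div_pow]
  field_simp

lemma besselJ_neg_one_half {u : ℝ} (hu : 0 < u) :
    besselJ (-1 / 2) u = ((√(2 / (π * u)) * Real.cos u : ℝ) : ℂ) := by
  refine HasSum.tsum_eq ?_
  convert Complex.hasSum_ofReal.2 ((Real.hasSum_cos u).mul_left √(2 / (π * u))) using 2 with j
  have h_half : 0 < u / 2 := half_pos hu
  have h_exp : (2 * (j : ℂ) + -1 / 2) = ((2 * j : ℕ) : ℂ) - 1 / 2 := by push_cast; ring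
  rw [show (j : ℂ) + 1 + -1 / 2 = j + 1 / 2 by ring, factorial_mul_Gamma_add_half, h_exp,
    cexp_natCast_sub_half_mul_log h_half, sqrt_two_div_pi_mul u]
  push_cast
  rw [div_pow]
  field_simp

lemma sqrt_two_div_pi_mul_le {u : ℝ} (hu : 0 < u) : √(2 / (π * u)) ≤ u ^ (-1 / 2 : ℝ) := by
  rw [neg_div, Real.rpow_neg hu.le, ← Real.sqrt_eq_rpow, ← Real.sqrt_inv]
  gcongr
  rw [div_le_iff₀ (by positivity), mul_comm π, inv_mul_cancel_left₀ hu.ne']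
  exact two_le_pi

lemma norm_besselJ_one_half_le {u : ℝ} (hu : 0 < u) :
    ‖besselJ (1 / 2) u‖ ≤ u ^ (1 / 2 : ℝ) := by
  have h_sin : |Real.sin u| ≤ u := Real.abs_sin_le_abs.trans_eq (abs_of_pos hu)
  rw [besselJ_one_half hu, Complex.norm_real, norm_mul, Real.norm_of_nonneg (Real.sqrt_nonneg _)]
  calc √(2 / (π * u)) * |Real.sin u| ≤ u ^ (-1 / 2 : ℝ) * u := by
        gcongr
        exact sqrt_two_div_pi_mul_le hu
    _ = u ^ (1 / 2 : ℝ) := by rw [← Real.rpow_add_one hu.ne']; norm_num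

lemma norm_besselJ_neg_one_half_le {u : ℝ} (hu : 0 < u) :
    ‖besselJ (-1 / 2) u‖ ≤ u ^ (-1 / 2 : ℝ) := by
  rw [besselJ_neg_one_half hu, Complex.norm_real, norm_mul,
    Real.norm_of_nonneg (Real.sqrt_nonneg _)]
  exact (mul_le_of_le_one_right (Real.sqrt_nonneg _) (Real.abs_cos_le_one u)).trans
    (sqrt_two_div_pi_mul_le hu)

end HalfIntegralOrder

section BoundedCutoff

variable {φ : ℝ → ℝ} {A B : ℝ}

lemma norm_setIntegral_Ioi_smul_le {E : Type*} [NormedAddCommGroup E] [NormedSpace ℝ E]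
    {K : ℝ → E} {s : ℝ} (hA : 0 < A) (hAB : A ≤ B) (hφ : ∀ u, |φ u| ≤ 1)
    (hsupp : ∀ u, u ∉ Set.Icc A B → φ u = 0) (hs : s ≤ 0) (hK : ∀ u, 0 < u → ‖K u‖ ≤ u ^ s) :
    ‖∫ u in Set.Ioi (0 : ℝ), φ u • K u‖ ≤ A ^ s * (B - A) := by
  have h_subset : Set.Icc A B ⊆ Set.Ioi 0 := fun u hu => hA.trans_le hu.1
  have h_bound : ∀ u ∈ Set.Icc A B, ‖φ u • K u‖ ≤ A ^ s := fun u hu =>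
    calc ‖φ u • K u‖ = |φ u| * ‖K u‖ := norm_smul _ _
      _ ≤ ‖K u‖ := mul_le_of_le_one_left (norm_nonneg _) (hφ u)
      _ ≤ u ^ s := hK u (hA.trans_le hu.1)
      _ ≤ A ^ s := Real.rpow_le_rpow_of_nonpos hA hu.1 hs
  rw [setIntegral_eq_of_subset_of_forall_sdiff_eq_zero measurableSet_Ioi h_subset
    fun u hu => by rw [hsupp u hu.2, zero_smul], ← Real.volume_real_Icc_of_le hAB]
  exact norm_setIntegral_le_of_norm_le_const measure_Icc_lt_top h_bound

lemma norm_phiTilde_le_s4 {β : ℂ} {s : ℝ} (hA : 0 < A) (hAB : A ≤ B) (hφ : ∀ u, |φ u| ≤ 1)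
    (hsupp : ∀ u, u ∉ Set.Icc A B → φ u = 0) (hs : s ≤ 1)
    (hJ : ∀ u, 0 < u → ‖besselJ (β - 1) u‖ ≤ u ^ s) :
    ‖phiTilde φ β‖ ≤ A ^ (s - 1) * (B - A) := by
  have h_kernel : ∀ u, 0 < u → ‖besselJ (β - 1) u / u‖ ≤ u ^ (s - 1) := fun u hu => by
    rw [norm_div, Complex.norm_real, Real.norm_of_nonneg hu.le, Real.rpow_sub_one hu.ne']
    gcongr
    exact hJ u hu
  have h_integral : phiTilde φ β = ∫ u in Set.Ioi (0 : ℝ), φ u • (besselJ (β - 1) u / u) := by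
    simp only [phiTilde, Complex.real_smul, mul_div_assoc', mul_comm]
  rw [h_integral]
  exact norm_setIntegral_Ioi_smul_le hA hAB hφ hsupp (sub_nonpos.2 hs) h_kernel

lemma norm_phiTilde_three_halves_le (hA : 0 < A) (hAB : A ≤ B) (hφ : ∀ u, |φ u| ≤ 1)
    (hsupp : ∀ u, u ∉ Set.Icc A B → φ u = 0) :
    ‖phiTilde φ (3 / 2)‖ ≤ A ^ (-1 / 2 : ℝ) * (B - A) := by
  convert norm_phiTilde_le_s4 (β := 3 / 2) (s := 1 / 2) hA hAB hφ hsupp (by norm_num) ?_ using 3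
  · norm_num
  · rw [show (3 / 2 - 1 : ℂ) = 1 / 2 by norm_num]
    exact fun u => norm_besselJ_one_half_le

lemma norm_phiTilde_one_half_le (hA : 0 < A) (hAB : A ≤ B) (hφ : ∀ u, |φ u| ≤ 1)
    (hsupp : ∀ u, u ∉ Set.Icc A B → φ u = 0) :
    ‖phiTilde φ (1 / 2)‖ ≤ A ^ (-3 / 2 : ℝ) * (B - A) := by
  convert norm_phiTilde_le_s4 (β := 1 / 2) (s := -1 / 2) hA hAB hφ hsupp (by norm_num) ?_ using 3
  · norm_num
  · rw [show (1 / 2 - 1 : ℂ) = -1 / 2 by norm_num]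
    exact fun u => norm_besselJ_neg_one_half_le

lemma norm_phiHatQuarterHalf_le (hA : 0 < A) (hAB : A ≤ B) (hφ : ∀ u, |φ u| ≤ 1)
    (hsupp : ∀ u, u ∉ Set.Icc A B → φ u = 0) :
    ‖phiHatQuarterHalf φ‖ ≤ A ^ (-3 / 2 : ℝ) * (B - A) := by
  have h_kernel : ∀ u, 0 < u → ‖Real.cos u * u ^ (-3 / 2 : ℝ)‖ ≤ u ^ (-3 / 2 : ℝ) := fun u hu => by
    rw [norm_mul, Real.norm_of_nonneg (Real.rpow_nonneg hu.le _)]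
    exact mul_le_of_le_one_left (Real.rpow_nonneg hu.le _) (Real.abs_cos_le_one u)
  have h_phase : ‖Complex.exp ((π : ℂ) * Complex.I / 4)‖ = 1 := by
    simp [Complex.norm_exp]
  rw [phiHatQuarterHalf, norm_mul, h_phase, one_mul, Complex.norm_real]
  simpa only [smul_eq_mul, mul_assoc, mul_left_comm] using
    norm_setIntegral_Ioi_smul_le hA hAB hφ hsupp (by norm_num) h_kernel

lemma norm_phiHatQuarterThreeHalf_le (hA : 0 < A) (hAB : A ≤ B) (hφ : ∀ u, |φ u| ≤ 1)
    (hsupp : ∀ u, u ∉ Set.Icc A B → φ u = 0) :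
    ‖phiHatQuarterThreeHalf φ‖ ≤ A ^ (-1 / 2 : ℝ) * (B - A) := by
  have h_kernel : ∀ u, 0 < u → ‖Real.sin u * u ^ (-3 / 2 : ℝ)‖ ≤ u ^ (-1 / 2 : ℝ) := fun u hu => by
    have h_sin : |Real.sin u| ≤ u := Real.abs_sin_le_abs.trans_eq (abs_of_pos hu)
    rw [norm_mul, Real.norm_of_nonneg (Real.rpow_nonneg hu.le _)]
    calc |Real.sin u| * u ^ (-3 / 2 : ℝ) ≤ u * u ^ (-3 / 2 : ℝ) := by gcongr
      _ = u ^ (-1 / 2 : ℝ) := by rw [← Real.rpow_one_add' hu.le (by norm_num)]; norm_num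
  have h_phase : ‖Complex.exp (3 * (π : ℂ) * Complex.I / 4)‖ = 1 := by
    simp [Complex.norm_exp]
  have h_half : ‖(1 / 2 : ℂ)‖ ≤ 1 := by norm_num
  rw [phiHatQuarterThreeHalf, norm_mul, norm_mul, h_phase, mul_one, Complex.norm_real]
  refine (mul_le_of_le_one_left (norm_nonneg _) h_half).trans ?_
  simpa only [smul_eq_mul, mul_assoc, mul_left_comm] using
    norm_setIntegral_Ioi_smul_le hA hAB hφ hsupp (by norm_num) h_kernel

end BoundedCutoff

lemma three_eighths_rpow_le {t : ℝ} (ht : -1 / 2 ≤ t) : (3 / 8 : ℝ) ^ t ≤ 5 / 3 :=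
  calc (3 / 8 : ℝ) ^ t ≤ (3 / 8) ^ (-1 / 2 : ℝ) :=
        Real.rpow_le_rpow_of_exponent_ge (by norm_num) (by norm_num) ht
    _ = √(8 / 3) := by
        rw [neg_div, Real.rpow_neg (by norm_num), ← Real.sqrt_eq_rpow, ← Real.sqrt_inv]; norm_num
    _ ≤ 5 / 3 := by rw [Real.sqrt_le_left (by norm_num)]; norm_num

lemma rpow_mul_supportLength_le {a x s : ℝ} (ha : 0 < a) (hx : 0 < x) (hs : -3 / 2 ≤ s) :
    (3 * a / (8 * x)) ^ s * (3 * a / (2 * x) - 3 * a / (8 * x)) ≤ 5 * (a / x) ^ (s + 1) := by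
  have h_length : 3 * a / (2 * x) - 3 * a / (8 * x) = 3 * (3 * a / (8 * x)) := by
    field_simp; ring
  calc (3 * a / (8 * x)) ^ s * (3 * a / (2 * x) - 3 * a / (8 * x))
      = 3 * (3 * a / (8 * x)) ^ (s + 1) := by
        rw [h_length, Real.rpow_add_one (by positivity)]; ring
    _ = 3 * ((3 / 8) ^ (s + 1) * (a / x) ^ (s + 1)) := by
        rw [mul_div_mul_comm, Real.mul_rpow (by norm_num) (by positivity)]
    _ ≤ 3 * (5 / 3 * (a / x) ^ (s + 1)) := by
        gcongr
        exact three_eighths_rpow_le (by linarith)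
    _ = 5 * (a / x) ^ (s + 1) := by ring

theorem stmt4_general {a x : ℝ} {φ : ℝ → ℝ} (ha : 0 < a) (hx : 0 < x) (_ : Measurable φ)
    (hφ : ∀ u, |φ u| ≤ 1)
    (hsupp : ∀ u, u ∉ Set.Icc (3 * a / (8 * x)) (3 * a / (2 * x)) → φ u = 0) :
    ‖phiTilde φ (3 / 2)‖ ≤ 5 * (a / x) ^ ((1 : ℝ) / 2) ∧
      ‖phiTilde φ (1 / 2)‖ ≤ 5 * (x / a) ^ ((1 : ℝ) / 2) ∧
      ‖phiHatQuarterHalf φ‖ ≤ 5 * (x / a) ^ ((1 : ℝ) / 2) ∧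
      ‖phiHatQuarterThreeHalf φ‖ ≤ 5 * (a / x) ^ ((1 : ℝ) / 2) := by
  have hA : 0 < 3 * a / (8 * x) := by positivity
  have hAB : 3 * a / (8 * x) ≤ 3 * a / (2 * x) := by gcongr; norm_num
  have h_sin := rpow_mul_supportLength_le ha hx (s := -1 / 2) (by norm_num)
  have h_cos := rpow_mul_supportLength_le ha hx (s := -3 / 2) le_rfl
  rw [show (-1 / 2 + 1 : ℝ) = 1 / 2 by norm_num] at h_sin
  rw [show (-3 / 2 + 1 : ℝ) = -(1 / 2) by norm_num, Real.rpow_neg (by positivity),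
    ← Real.inv_rpow (by positivity), inv_div] at h_cos
  exact ⟨(norm_phiTilde_three_halves_le hA hAB hφ hsupp).trans h_sin,
    (norm_phiTilde_one_half_le hA hAB hφ hsupp).trans h_cos,
    (norm_phiHatQuarterHalf_le hA hAB hφ hsupp).trans h_cos,
    (norm_phiHatQuarterThreeHalf_le hA hAB hφ hsupp).trans h_sin⟩

theorem stmt4 :
    ∃ C : ℝ, ∀ (a x : ℝ) (φ : ℝ → ℝ), 0 < a → 0 < x →
      Measurable φ → (∀ u, 0 ≤ φ u ∧ φ u ≤ 1) →
      (∀ u, u ∉ Set.Icc (3 * a / (8 * x)) (3 * a / (2 * x)) → φ u = 0) →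
      ‖phiTilde φ (3 / 2)‖ ≤ C * (a / x) ^ ((1 : ℝ) / 2) ∧
      ‖phiTilde φ (1 / 2)‖ ≤ C * (x / a) ^ ((1 : ℝ) / 2) ∧
      ‖phiHatQuarterHalf φ‖ ≤ C * (x / a) ^ ((1 : ℝ) / 2) ∧
      ‖phiHatQuarterThreeHalf φ‖ ≤ C * (a / x) ^ ((1 : ℝ) / 2) := by
  refine ⟨5, fun a x φ ha hx hφ_meas hφ hsupp => ?_⟩
  have hφ_abs : ∀ u, |φ u| ≤ 1 := fun u => (abs_of_nonneg (hφ u).1).trans_le (hφ u).2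
  exact stmt4_general ha hx hφ_meas hφ_abs hsupp
end

section
/- For every δ ∈ (0, 1/2) and every t₀ ∈ (0, 1/12] there exists a constant C = C(δ, t₀) such that, under the hypotheses of the context, for every k ∈ {1/2, 3/2} and every t ∈ [t₀, 1/12] one has | φ̂(it) − ( e^{kπi/2} cos(πt) Γ(1/2 + k/2 + t) Γ(2t) / ( Γ(1/2 − k/2 + t) · 2^{2t} π^{2t} · (a/(4π))^{2t} ) ) · (2^{2t} − 1) x^{2t} / (2t) | ≤ C·( x^{2t−δ}/a^{2t} + a^{2t}/x^{2t} + 1 ). -/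
open Real MeasureTheory

/-!
For bounded `u` one has `J_ν(u) = (u/2)^ν / Γ(1+ν) + O(u^{2 + Re ν})`, so up to a bounded error
`φ̃(1+ν)` equals `2^{-ν} / Γ(1+ν)` times the Mellin transform of the cutoff `φ` at `ν`. At `ν = 2t`
this is bounded. At `ν = -2t`, comparing `φ` with the indicators of its plateau `[a/(2x), a/x]` and
of its support gives `(2^{2t} - 1) (x/a)^{2t} / (2t)` with an error of order `(T/x) (x/a)^{2t}`.
Since `cos (kπ) = 0`, the factor `cos (2πt)` in the denominator of `φ̂(it)` splits as
`2 cos (kπ/2 - πt) cos (kπ/2 + πt)`, and the reflection formula for `Γ` identifies the coefficient.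
Every constant is continuous in `(k, t)` for `0 < t < 1/4`, hence bounded on compact sets.
-/

section Bessel

lemma norm_inv_Gamma_add_natCast_le {z : ℂ} (hz : 1 ≤ z.re) (n : ℕ) :
    ‖(Complex.Gamma (z + n))⁻¹‖ ≤ ‖(Complex.Gamma z)⁻¹‖ := by
  induction n with
  | zero => simp
  | succ n ih =>
    have hnorm : 1 ≤ ‖z + n‖ :=
      calc (1 : ℝ) ≤ (z + n).re := by simpa using le_add_of_le_of_nonneg hz n.cast_nonneg
        _ ≤ ‖z + n‖ := Complex.re_le_norm _
    have hne : z + n ≠ 0 := norm_pos_iff.mp (zero_lt_one.trans_le hnorm)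
    rw [Nat.cast_succ, ← add_assoc, Complex.Gamma_add_one _ hne, mul_inv, norm_mul, norm_inv]
    exact (mul_le_of_le_one_left (norm_nonneg _) (inv_le_one_of_one_le₀ hnorm)).trans ih

/-- The `j`-th term of the power series defining `besselJ ν u`. -/
noncomputable def besselJTerm (ν : ℂ) (u : ℝ) (j : ℕ) : ℂ :=
  ((-1 : ℂ) ^ j / ((Nat.factorial j : ℂ) * Complex.Gamma ((j : ℂ) + 1 + ν))) *
    Complex.exp ((2 * (j : ℂ) + ν) * (Real.log (u / 2) : ℂ))

variable {ν : ℂ}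

lemma norm_besselJTerm_succ_le (hν : -1 ≤ ν.re) (u : ℝ) (j : ℕ) :
    ‖besselJTerm ν u (j + 1)‖ ≤ ‖(Complex.Gamma (2 + ν))⁻¹‖ *
      rexp ((2 + ν.re) * log (u / 2)) * (rexp (2 * log (u / 2)) ^ j / j.factorial) := by
  have hGamma : ‖(Complex.Gamma ((j + 1 : ℕ) + 1 + ν))⁻¹‖ ≤ ‖(Complex.Gamma (2 + ν))⁻¹‖ := by
    have hre : 1 ≤ (2 + ν).re := by
      rw [Complex.add_re, Complex.re_ofNat]
      linarith
    convert norm_inv_Gamma_add_natCast_le hre j using 4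
    push_cast
    ring
  have hexp : ‖Complex.exp ((2 * ((j + 1 : ℕ) : ℂ) + ν) * (log (u / 2) : ℂ))‖ =
      rexp ((2 + ν.re) * log (u / 2)) * rexp (2 * log (u / 2)) ^ j := by
    rw [Complex.norm_exp, ← Real.exp_nat_mul, ← Real.exp_add, Complex.re_mul_ofReal]
    congr 1
    simp only [Nat.cast_add, Nat.cast_one, Complex.add_re, Complex.mul_re, Complex.re_ofNat,
      Complex.natCast_re, Complex.one_re, Complex.im_ofNat, Complex.add_im, Complex.natCast_im,
      Complex.one_im, add_zero, mul_zero, sub_zero]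
    ring
  have hfact : ((j + 1).factorial : ℝ)⁻¹ ≤ (j.factorial : ℝ)⁻¹ := by
    gcongr
    exact j.le_succ
  rw [besselJTerm, div_eq_mul_inv, mul_inv, norm_mul, norm_mul, norm_mul, hexp, norm_pow, norm_neg,
    norm_one, one_pow, one_mul, norm_inv, Complex.norm_natCast]
  calc ((j + 1).factorial : ℝ)⁻¹ * ‖(Complex.Gamma ((j + 1 : ℕ) + 1 + ν))⁻¹‖ *
        (rexp ((2 + ν.re) * log (u / 2)) * rexp (2 * log (u / 2)) ^ j)
      ≤ (j.factorial : ℝ)⁻¹ * ‖(Complex.Gamma (2 + ν))⁻¹‖ *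
        (rexp ((2 + ν.re) * log (u / 2)) * rexp (2 * log (u / 2)) ^ j) := by gcongr
    _ = _ := by ring

lemma summable_besselJTerm (hν : -1 ≤ ν.re) (u : ℝ) : Summable (besselJTerm ν u) :=
  (summable_nat_add_iff 1).mp <| .of_norm_bounded
    ((Real.summable_pow_div_factorial _).mul_left _) (norm_besselJTerm_succ_le hν u)

lemma measurable_besselJ (hν : -1 ≤ ν.re) : Measurable (besselJ ν) :=
  measurable_of_tendsto_metrizable
    (f := fun n u ↦ ∑ j ∈ Finset.range n, besselJTerm ν u j)
    (fun n ↦ Finset.measurable_fun_sum _ fun j _ ↦ by unfold besselJTerm; fun_prop)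
    (tendsto_pi_nhds.mpr fun u ↦ (summable_besselJTerm hν u).hasSum.tendsto_sum_nat)

/-- A bound, uniform in `0 < u ≤ B`, for the modulus of the sum of the terms `j ≥ 1` of the series
for `besselJ ν u` when `-1 ≤ ν.re`. -/
noncomputable def besselJTailBound (ν : ℂ) (B : ℝ) : ℝ :=
  ‖(Complex.Gamma (2 + ν))⁻¹‖ * (B / 2) ^ (2 + ν.re) * rexp ((B / 2) ^ 2)

lemma besselJTailBound_nonneg (ν : ℂ) {B : ℝ} (hB : 0 ≤ B) : 0 ≤ besselJTailBound ν B := by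
  unfold besselJTailBound
  positivity

lemma continuous_besselJTailBound {B : ℝ} (hB : 0 < B) :
    Continuous fun ν ↦ besselJTailBound ν B := by
  have hGamma : Continuous fun ν : ℂ ↦ (Complex.Gamma (2 + ν))⁻¹ :=
    Complex.differentiable_one_div_Gamma.continuous.comp (continuous_const.add continuous_id)
  have hpow : Continuous fun ν : ℂ ↦ (B / 2) ^ (2 + ν.re) :=
    continuous_const.rpow (by fun_prop) fun _ ↦ .inl (half_pos hB).ne'
  exact (hGamma.norm.mul hpow).mul continuous_const

lemma norm_besselJ_sub_le (hν : -1 ≤ ν.re) {u : ℝ} (hu : 0 < u) :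
    ‖besselJ ν u - (Complex.Gamma (1 + ν))⁻¹ * ((u / 2 : ℝ) : ℂ) ^ ν‖ ≤
      besselJTailBound ν u := by
  have hu2 : 0 < u / 2 := half_pos hu
  have hzero : besselJTerm ν u 0 = (Complex.Gamma (1 + ν))⁻¹ * ((u / 2 : ℝ) : ℂ) ^ ν := by
    rw [Complex.cpow_def_of_ne_zero (by exact_mod_cast hu2.ne'), ← Complex.ofReal_log hu2.le]
    simp [besselJTerm, mul_comm]
  have hexp : HasSum (fun j : ℕ ↦ ((u / 2) ^ 2) ^ j / j.factorial) (rexp ((u / 2) ^ 2)) := by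
    simpa only [Real.exp_eq_exp_ℝ] using NormedSpace.expSeries_div_hasSum_exp ((u / 2) ^ 2)
  have htail : besselJ ν u - besselJTerm ν u 0 = ∑' j, besselJTerm ν u (j + 1) :=
    sub_eq_of_eq_add' (summable_besselJTerm hν u).tsum_eq_zero_add
  rw [← hzero, htail]
  refine tsum_of_norm_bounded (hexp.mul_left _) fun j ↦ ?_
  simpa only [mul_comm _ (log (u / 2)), ← Real.rpow_def_of_pos hu2, Real.rpow_two]
    using norm_besselJTerm_succ_le hν u j

lemma besselJTailBound_div_le (hν : -1 ≤ ν.re) {u B : ℝ} (hu : 0 < u) (huB : u ≤ B) :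
    besselJTailBound ν u / u ≤ besselJTailBound ν B / B := by
  have hpow {y : ℝ} (hy : 0 < y) : besselJTailBound ν y / y =
      ‖(Complex.Gamma (2 + ν))⁻¹‖ * ((y / 2) ^ (1 + ν.re) / 2) * rexp ((y / 2) ^ 2) := by
    rw [besselJTailBound, show 2 + ν.re = 1 + ν.re + 1 by ring,
      Real.rpow_add_one (half_pos hy).ne']
    field_simp
  have hexponent : 0 ≤ 1 + ν.re := by linarith
  have hB : 0 < B := hu.trans_le huB
  rw [hpow hu, hpow hB]
  gcongr

lemma besselJTailBound_le_besselJTailBound (hν : -1 ≤ ν.re) {u B : ℝ} (hu : 0 < u) (huB : u ≤ B) :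
    besselJTailBound ν u ≤ besselJTailBound ν B := by
  have hexponent : 0 ≤ 2 + ν.re := by linarith
  have hB : 0 < B := hu.trans_le huB
  unfold besselJTailBound
  gcongr

end Bessel

section Mellin

variable {φ : ℝ → ℝ} {A B P Q s : ℝ}

lemma nonneg_of_indicator_one_le {S : Set ℝ} (hlow : S.indicator 1 ≤ φ) : 0 ≤ φ :=
  le_trans (Set.indicator_nonneg fun _ _ ↦ zero_le_one) hlow

lemma integrableOn_rpow_mul (hφ : Measurable φ) (h0 : 0 ≤ φ)
    (hupp : φ ≤ (Set.Icc A B).indicator 1) (hA : 0 < A) (s : ℝ) :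
    IntegrableOn (fun u ↦ u ^ (s - 1) * φ u) (Set.Ioi 0) := by
  have hcont : ContinuousOn (fun u : ℝ ↦ u ^ (s - 1)) (Set.Icc A B) :=
    continuousOn_id.rpow_const fun u hu ↦ .inl (hA.trans_le hu.1).ne'
  refine (hcont.integrableOn_Icc.integrable_indicator measurableSet_Icc).integrableOn.mono'
    (by fun_prop) ((ae_restrict_iff' measurableSet_Ioi).mpr <| .of_forall fun u (hu : 0 < u) ↦ ?_)
  calc ‖u ^ (s - 1) * φ u‖ = u ^ (s - 1) * φ u :=
        Real.norm_of_nonneg (mul_nonneg (by positivity) (h0 u))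
    _ ≤ u ^ (s - 1) * (Set.Icc A B).indicator 1 u :=
        mul_le_mul_of_nonneg_left (hupp u) (by positivity)
    _ = (Set.Icc A B).indicator (fun u ↦ u ^ (s - 1)) u := by simp [Set.indicator_apply]

lemma mellinConvergent_ofReal_comp (hφ : Measurable φ) (h0 : 0 ≤ φ)
    (hupp : φ ≤ (Set.Icc A B).indicator 1) (hA : 0 < A) (ν : ℂ) :
    MellinConvergent (fun u ↦ (φ u : ℂ)) ν := by
  refine (integrable_norm_iff (by fun_prop)).mp ?_
  refine (integrableOn_rpow_mul hφ h0 hupp hA ν.re).congr_fun (fun u (hu : 0 < u) ↦ ?_)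
    measurableSet_Ioi
  simp only [smul_eq_mul, norm_mul, Complex.norm_real, Complex.norm_cpow_eq_rpow_re_of_pos hu,
    Real.norm_of_nonneg (h0 u), Complex.sub_re, Complex.one_re]

lemma mellin_ofReal_comp (φ : ℝ → ℝ) (s : ℝ) :
    mellin (fun u ↦ (φ u : ℂ)) s = ((∫ u in Set.Ioi 0, u ^ (s - 1) * φ u : ℝ) : ℂ) := by
  rw [mellin, ← integral_complex_ofReal]
  refine setIntegral_congr_fun measurableSet_Ioi fun u (hu : 0 < u) ↦ ?_
  simp [Complex.ofReal_cpow hu.le]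

lemma ofReal_half_cpow {u : ℝ} (hu : 0 ≤ u) (ν : ℂ) :
    ((u / 2 : ℝ) : ℂ) ^ ν = 2 ^ (-ν) * (u : ℂ) ^ ν := by
  rw [div_eq_mul_inv, Complex.ofReal_mul, Complex.mul_cpow_ofReal_nonneg hu (by norm_num),
    Complex.ofReal_inv, Complex.ofReal_ofNat, Complex.inv_cpow _ _ (by simp [Real.pi_ne_zero.symm]),
    ← Complex.cpow_neg, mul_comm]

lemma norm_besselJ_sub_div_mul_le (h0 : 0 ≤ φ) (hupp : φ ≤ (Set.Icc A B).indicator 1)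
    {ν : ℂ} (hν : -1 ≤ ν.re) {u : ℝ} (hu : 0 < u) :
    ‖(besselJ ν u - (Complex.Gamma (1 + ν))⁻¹ * ((u / 2 : ℝ) : ℂ) ^ ν) / u * φ u‖ ≤
      (Set.Ioc 0 B).indicator (fun _ ↦ besselJTailBound ν B / B) u := by
  rw [norm_mul, norm_div, Complex.norm_of_nonneg hu.le, Complex.norm_of_nonneg (h0 u)]
  by_cases huB : u ≤ B
  · have hφu : φ u ≤ 1 := (hupp u).trans (Set.indicator_le_self' (fun _ _ ↦ zero_le_one) u)
    rw [Set.indicator_of_mem (show u ∈ Set.Ioc 0 B from ⟨hu, huB⟩)]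
    calc ‖besselJ ν u - (Complex.Gamma (1 + ν))⁻¹ * ((u / 2 : ℝ) : ℂ) ^ ν‖ / u * φ u
        ≤ ‖besselJ ν u - (Complex.Gamma (1 + ν))⁻¹ * ((u / 2 : ℝ) : ℂ) ^ ν‖ / u :=
          mul_le_of_le_one_right (by positivity) hφu
      _ ≤ besselJTailBound ν u / u := by
          gcongr
          exact norm_besselJ_sub_le hν hu
      _ ≤ besselJTailBound ν B / B := besselJTailBound_div_le hν hu huB
  · have hφu : φ u = 0 := le_antisymm
      ((hupp u).trans_eq (Set.indicator_of_notMem (fun h ↦ huB h.2) _)) (h0 u)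
    simp [hφu, huB]

lemma norm_phiTilde_sub_mellin_le (hφ : Measurable φ) (h0 : 0 ≤ φ)
    (hupp : φ ≤ (Set.Icc A B).indicator 1) (hA : 0 < A) (hAB : A ≤ B) {ν : ℂ} (hν : -1 ≤ ν.re) :
    ‖phiTilde φ (1 + ν) -
        (Complex.Gamma (1 + ν))⁻¹ * 2 ^ (-ν) * mellin (fun u ↦ (φ u : ℂ)) ν‖ ≤
      besselJTailBound ν B := by
  have hB : 0 < B := hA.trans_le hAB
  have hJ := measurable_besselJ hν
  set r : ℝ → ℂ := fun u ↦
    (besselJ ν u - (Complex.Gamma (1 + ν))⁻¹ * ((u / 2 : ℝ) : ℂ) ^ ν) / u * φ u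
  set bound : ℝ → ℝ := (Set.Ioc 0 B).indicator fun _ ↦ besselJTailBound ν B / B
  have hr_le : ∀ᵐ u ∂volume.restrict (Set.Ioi 0), ‖r u‖ ≤ bound u :=
    (ae_restrict_iff' measurableSet_Ioi).mpr <| .of_forall fun _ ↦
      norm_besselJ_sub_div_mul_le h0 hupp hν
  have hbound : IntegrableOn bound (Set.Ioi 0) :=
    ((integrableOn_const (by simp)).integrable_indicator measurableSet_Ioc).integrableOn
  have hr : IntegrableOn r (Set.Ioi 0) := hbound.mono' (by fun_prop) hr_le
  have hsplit : phiTilde φ (1 + ν) = (∫ u in Set.Ioi 0, r u) +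
      (Complex.Gamma (1 + ν))⁻¹ * 2 ^ (-ν) * mellin (fun u ↦ (φ u : ℂ)) ν := by
    rw [phiTilde, mellin, ← integral_const_mul, ← integral_add hr
      ((mellinConvergent_ofReal_comp hφ h0 hupp hA ν).const_mul _)]
    refine setIntegral_congr_fun measurableSet_Ioi fun u (hu : 0 < u) ↦ ?_
    simp only [r, add_sub_cancel_left, smul_eq_mul, ofReal_half_cpow hu.le,
      Complex.cpow_sub _ _ (Complex.ofReal_ne_zero.mpr hu.ne'), Complex.cpow_one]
    ring
  rw [hsplit, add_sub_cancel_right]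
  calc ‖∫ u in Set.Ioi 0, r u‖ ≤ ∫ u in Set.Ioi 0, bound u :=
        norm_integral_le_of_norm_le hbound hr_le
    _ = besselJTailBound ν B := by
        rw [setIntegral_indicator measurableSet_Ioc, Set.inter_eq_right.mpr Set.Ioc_subset_Ioi_self,
          setIntegral_const]
        simp [hB.le, field]

lemma integral_rpow_mul_indicator_Icc (hA : 0 < A) (hAB : A ≤ B) (hs : s ≠ 0) :
    ∫ u in Set.Ioi 0, u ^ (s - 1) * (Set.Icc A B).indicator 1 u = (B ^ s - A ^ s) / s := by
  have hsub : Set.Icc A B ⊆ Set.Ioi 0 := fun u hu ↦ hA.trans_le hu.1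
  have hind (u : ℝ) : u ^ (s - 1) * (Set.Icc A B).indicator 1 u =
      (Set.Icc A B).indicator (fun u ↦ u ^ (s - 1)) u := by simp [Set.indicator_apply]
  simp only [hind]
  rw [setIntegral_indicator measurableSet_Icc, Set.inter_eq_right.mpr hsub,
    integral_Icc_eq_integral_Ioc, ← intervalIntegral.integral_of_le hAB, integral_rpow,
    sub_add_cancel]
  refine .inr ⟨by simpa [sub_eq_iff_eq_add] using hs, fun h ↦ ?_⟩
  rw [Set.uIcc_of_le hAB] at h
  exact lt_irrefl (0 : ℝ) (hsub h)

lemma integral_rpow_mul_le (hφ : Measurable φ) (h0 : 0 ≤ φ)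
    (hupp : φ ≤ (Set.Icc A B).indicator 1) (hA : 0 < A) (hAB : A ≤ B) (hs : s ≠ 0) :
    ∫ u in Set.Ioi 0, u ^ (s - 1) * φ u ≤ (B ^ s - A ^ s) / s := by
  rw [← integral_rpow_mul_indicator_Icc hA hAB hs]
  refine setIntegral_mono_on (integrableOn_rpow_mul hφ h0 hupp hA s)
    (integrableOn_rpow_mul ?_ ?_ le_rfl hA s) measurableSet_Ioi fun u (hu : 0 < u) ↦ ?_
  · exact measurable_one.indicator measurableSet_Icc
  · exact nonneg_of_indicator_one_le le_rfl
  · exact mul_le_mul_of_nonneg_left (hupp u) (by positivity)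

lemma le_integral_rpow_mul (hφ : Measurable φ) (hlow : (Set.Icc P Q).indicator 1 ≤ φ)
    (hupp : φ ≤ (Set.Icc A B).indicator 1) (hA : 0 < A) (hP : 0 < P) (hPQ : P ≤ Q) (hs : s ≠ 0) :
    (Q ^ s - P ^ s) / s ≤ ∫ u in Set.Ioi 0, u ^ (s - 1) * φ u := by
  rw [← integral_rpow_mul_indicator_Icc hP hPQ hs]
  refine setIntegral_mono_on
    (integrableOn_rpow_mul ?_ (nonneg_of_indicator_one_le le_rfl) le_rfl hP s)
    (integrableOn_rpow_mul hφ (nonneg_of_indicator_one_le hlow) hupp hA s) measurableSet_Ioi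
    fun u (hu : 0 < u) ↦ ?_
  · exact measurable_one.indicator measurableSet_Icc
  · exact mul_le_mul_of_nonneg_left (hlow u) (by positivity)

end Mellin


section Plateau

lemma rpow_sub_rpow_le_mul {x y s : ℝ} (hx : 0 < x) (hxy : x ≤ y) (hs0 : 0 ≤ s) (hs1 : s ≤ 1) :
    y ^ s - x ^ s ≤ s * ((y - x) / x * x ^ s) := by
  have hratio : 0 ≤ (y - x) / x := div_nonneg (sub_nonneg.mpr hxy) hx.le
  have hy : y = (1 + (y - x) / x) * x := by field_simp; ring
  have hbern : (1 + (y - x) / x) ^ s ≤ 1 + s * ((y - x) / x) :=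
    rpow_one_add_le_one_add_mul_self (by linarith) hs0 hs1
  calc y ^ s - x ^ s = ((1 + (y - x) / x) ^ s - 1) * x ^ s := by
        conv_lhs => rw [hy, Real.mul_rpow (by linarith) hx.le]
        ring
    _ ≤ s * ((y - x) / x) * x ^ s := by
        gcongr
        linarith
    _ = s * ((y - x) / x * x ^ s) := mul_assoc _ _ _

lemma div_rpow_neg {a y : ℝ} (ha : 0 ≤ a) (hy : 0 ≤ y) (s : ℝ) :
    (a / y) ^ (-s) = y ^ s / a ^ s := by
  rw [Real.rpow_neg (div_nonneg ha hy), Real.div_rpow ha hy, inv_div]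

variable {x a T R s : ℝ} {φ : ℝ → ℝ}

lemma two_mul_add_rpow_sub_rpow_sub_le (hx : 0 < x) (hT : 0 ≤ T) (hTx : 2 * T ≤ x) (hs0 : 0 ≤ s)
    (hs1 : s ≤ 1) :
    (2 * x + 2 * T) ^ s - (x - T) ^ s - (2 ^ s - 1) * x ^ s ≤ s * (4 * (T / x * x ^ s)) := by
  have hright : (2 * x + 2 * T) ^ s - (2 * x) ^ s ≤ s * (2 * (T / x * x ^ s)) :=
    calc (2 * x + 2 * T) ^ s - (2 * x) ^ s
        = 2 ^ s * ((x + T) ^ s - x ^ s) := by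
          rw [← mul_add, Real.mul_rpow two_pos.le (by linarith), Real.mul_rpow two_pos.le hx.le,
            mul_sub]
      _ ≤ 2 * (s * ((x + T - x) / x * x ^ s)) := by
          gcongr
          · exact sub_nonneg.mpr (by gcongr; linarith)
          · exact (Real.rpow_le_rpow_of_exponent_le one_le_two hs1).trans_eq (Real.rpow_one 2)
          · exact rpow_sub_rpow_le_mul hx (by linarith) hs0 hs1
      _ = s * (2 * (T / x * x ^ s)) := by
          rw [add_sub_cancel_left]
          ring
  have hleft : x ^ s - (x - T) ^ s ≤ s * (2 * (T / x * x ^ s)) :=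
    calc x ^ s - (x - T) ^ s ≤ s * ((x - (x - T)) / (x - T) * (x - T) ^ s) :=
          rpow_sub_rpow_le_mul (by linarith) (by linarith) hs0 hs1
      _ ≤ s * (T / (x / 2) * x ^ s) := by
          rw [sub_sub_cancel]
          have : 0 ≤ x - T := by linarith
          gcongr <;> linarith
      _ = s * (2 * (T / x * x ^ s)) := by field_simp
  rw [Real.mul_rpow two_pos.le hx.le] at hright
  linarith

lemma abs_integral_rpow_neg_mul_sub_le (hx : 0 < x) (hT : 0 ≤ T) (hTx : 2 * T ≤ x) (ha : 0 < a)
    (hφ : Measurable φ) (hlow : (Set.Icc (a / (2 * x)) (a / x)).indicator 1 ≤ φ)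
    (hupp : φ ≤ (Set.Icc (a / (2 * x + 2 * T)) (a / (x - T))).indicator 1)
    (hs0 : 0 < s) (hs1 : s ≤ 1) :
    |(∫ u in Set.Ioi 0, u ^ (-s - 1) * φ u) - (2 ^ s - 1) * (x ^ s / a ^ s) / s| ≤
      4 * (T / x * (x ^ s / a ^ s)) := by
  have hxT : 0 < x - T := by linarith
  have h0 : 0 ≤ φ := nonneg_of_indicator_one_le hlow
  have hge := le_integral_rpow_mul hφ hlow hupp (by positivity) (by positivity)
    (by gcongr; linarith) (neg_ne_zero.mpr hs0.ne')
  have hle := integral_rpow_mul_le hφ h0 hupp (by positivity) (by gcongr; linarith)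
    (neg_ne_zero.mpr hs0.ne')
  simp only [div_rpow_neg ha.le hx.le, div_rpow_neg ha.le hxT.le,
    div_rpow_neg ha.le (show 0 ≤ 2 * x by positivity),
    div_rpow_neg ha.le (show 0 ≤ 2 * x + 2 * T by positivity)] at hge hle
  have hlower : (x ^ s / a ^ s - (2 * x) ^ s / a ^ s) / -s =
      (2 ^ s - 1) * (x ^ s / a ^ s) / s := by
    rw [Real.mul_rpow two_pos.le hx.le]
    field_simp
    ring
  have hgap : ((x - T) ^ s / a ^ s - (2 * x + 2 * T) ^ s / a ^ s) / -s -
      (2 ^ s - 1) * (x ^ s / a ^ s) / s ≤ 4 * (T / x * (x ^ s / a ^ s)) :=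
    calc _ = ((2 * x + 2 * T) ^ s - (x - T) ^ s - (2 ^ s - 1) * x ^ s) / (a ^ s * s) := by
          field_simp
          ring
      _ ≤ s * (4 * (T / x * x ^ s)) / (a ^ s * s) := by
          gcongr
          exact two_mul_add_rpow_sub_rpow_sub_le hx hT hTx hs0.le hs1
      _ = _ := by field_simp
  rw [abs_of_nonneg] <;> linarith

lemma norm_phiTilde_ofReal_sub_le {A B : ℝ} (hφ : Measurable φ) (h0 : 0 ≤ φ)
    (hupp : φ ≤ (Set.Icc A B).indicator 1) (hA : 0 < A) (hAB : A ≤ B) (hs : -1 ≤ s) :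
    ‖phiTilde φ (1 + (s : ℂ)) -
        ((Real.Gamma (1 + s))⁻¹ * 2 ^ (-s) * ∫ u in Set.Ioi 0, u ^ (s - 1) * φ u : ℝ)‖ ≤
      besselJTailBound s B := by
  convert norm_phiTilde_sub_mellin_le hφ h0 hupp hA hAB (ν := s) (by simpa using hs) using 3
  rw [mellin_ofReal_comp, Complex.ofReal_mul, Complex.ofReal_mul, Complex.ofReal_inv,
    Complex.ofReal_cpow two_pos.le, ← Complex.Gamma_ofReal]
  push_cast
  rfl

lemma norm_phiTilde_one_sub_sub_le (hx : 0 < x) (hT : 0 ≤ T) (hTx : 2 * T ≤ x) (ha : 0 < a)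
    (haR : a / (x - T) ≤ R) (hφ : Measurable φ)
    (hlow : (Set.Icc (a / (2 * x)) (a / x)).indicator 1 ≤ φ)
    (hupp : φ ≤ (Set.Icc (a / (2 * x + 2 * T)) (a / (x - T))).indicator 1)
    (hs0 : 0 < s) (hs1 : s ≤ 1) :
    ‖phiTilde φ (1 - s) -
        ((Real.Gamma (1 - s))⁻¹ * 2 ^ s * ((2 ^ s - 1) * (x ^ s / a ^ s) / s) : ℝ)‖ ≤
      besselJTailBound ((-s : ℝ) : ℂ) R +
        |(Real.Gamma (1 - s))⁻¹| * 2 ^ s * (4 * (T / x * (x ^ s / a ^ s))) := by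
  have hxT : 0 < x - T := by linarith
  have h0 : 0 ≤ φ := nonneg_of_indicator_one_le hlow
  have htail : besselJTailBound ((-s : ℝ) : ℂ) (a / (x - T)) ≤
      besselJTailBound ((-s : ℝ) : ℂ) R :=
    besselJTailBound_le_besselJTailBound (by simpa using hs1) (by positivity) haR
  have hTilde := norm_phiTilde_ofReal_sub_le hφ h0 hupp (by positivity) (by gcongr; linarith)
    (neg_le_neg hs1)
  rw [neg_neg, ← sub_eq_add_neg, Complex.ofReal_neg, ← sub_eq_add_neg, ← Complex.ofReal_neg]
    at hTilde
  refine (norm_sub_le_norm_sub_add_norm_sub _ _ _).trans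
    (add_le_add (hTilde.trans htail) ?_)
  rw [← Complex.ofReal_sub, ← mul_sub, Complex.norm_real, norm_mul, norm_mul,
    Real.norm_of_nonneg (by positivity : (0 : ℝ) ≤ 2 ^ s), Real.norm_eq_abs, Real.norm_eq_abs]
  gcongr
  exact abs_integral_rpow_neg_mul_sub_le hx hT hTx ha hφ hlow hupp hs0 hs1

lemma norm_phiTilde_one_add_le {A B : ℝ} (hφ : Measurable φ) (h0 : 0 ≤ φ)
    (hupp : φ ≤ (Set.Icc A B).indicator 1) (hA : 0 < A) (hAB : A ≤ B) (hBR : B ≤ R)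
    (hs : 0 < s) :
    ‖phiTilde φ (1 + s)‖ ≤
      besselJTailBound s R + |(Real.Gamma (1 + s))⁻¹| * 2 ^ (-s) * (R ^ s / s) := by
  have hB : 0 < B := hA.trans_le hAB
  have hTilde := (norm_phiTilde_ofReal_sub_le hφ h0 hupp hA hAB (by linarith)).trans
    (besselJTailBound_le_besselJTailBound (ν := s) (by rw [Complex.ofReal_re]; linarith) hB hBR)
  have hint : ∫ u in Set.Ioi 0, u ^ (s - 1) * φ u ≤ R ^ s / s :=
    calc _ ≤ (B ^ s - A ^ s) / s := integral_rpow_mul_le hφ h0 hupp hA hAB hs.ne'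
      _ ≤ B ^ s / s := by
          gcongr
          exact sub_le_self _ (by positivity)
      _ ≤ R ^ s / s := by gcongr
  have hint0 : 0 ≤ ∫ u in Set.Ioi 0, u ^ (s - 1) * φ u :=
    setIntegral_nonneg measurableSet_Ioi fun u (hu : 0 < u) ↦
      mul_nonneg (by positivity) (h0 u)
  refine (norm_le_norm_sub_add _ _).trans (add_le_add hTilde ?_)
  rw [Complex.norm_real, norm_mul, norm_mul, Real.norm_of_nonneg hint0,
    Real.norm_of_nonneg (by positivity : (0 : ℝ) ≤ 2 ^ (-s)), Real.norm_eq_abs]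
  gcongr

end Plateau

section Coefficient

variable {k t : ℝ}

/-- The real scalar `π² / (sin (πt) cos (2πt) Γ(1/2 - k/2 - t) Γ(1/2 - k/2 + t))`, which together
with the phase `e^{kπi/2}` makes up the prefactor of `phiHatIt k φ t`. -/
noncomputable def phiHatFactor (k t : ℝ) : ℝ :=
  π ^ 2 * (Real.sin (π * t) * Real.cos (2 * π * t))⁻¹ *
    ((Real.Gamma (1 / 2 - k / 2 - t))⁻¹ * (Real.Gamma (1 / 2 - k / 2 + t))⁻¹)

lemma phiHatIt_eq (k t : ℝ) (φ : ℝ → ℝ) :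
    phiHatIt k φ t = Complex.exp ((k : ℂ) * (π : ℂ) * Complex.I / 2) * (phiHatFactor k t *
      (Real.cos (k * π / 2 - π * t) * phiTilde φ (1 - (2 * t : ℝ)) -
        Real.cos (k * π / 2 + π * t) * phiTilde φ (1 + (2 * t : ℝ)))) := by
  have hexp : Complex.exp ((1 + (k : ℂ)) * (π : ℂ) * Complex.I / 2) =
      Complex.I * Complex.exp ((k : ℂ) * (π : ℂ) * Complex.I / 2) := by
    nth_rw 2 [← Complex.exp_pi_div_two_mul_I]
    rw [← Complex.exp_add]
    ring_nf
  rw [phiHatIt, phiHatFactor, hexp, div_eq_mul_inv]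
  push_cast [← Complex.Gamma_ofReal]
  simp only [mul_inv]
  field_simp

lemma norm_exp_mul_pi_mul_I_div_two (k : ℝ) :
    ‖Complex.exp ((k : ℂ) * (π : ℂ) * Complex.I / 2)‖ = 1 := by
  simp [Complex.norm_exp]

lemma cos_two_pi_mul_eq (hk : Real.cos (k * π) = 0) (t : ℝ) :
    Real.cos (2 * π * t) = 2 * Real.cos (k * π / 2 - π * t) * Real.cos (k * π / 2 + π * t) := by
  rw [Real.two_mul_cos_mul_cos]
  ring_nf at hk ⊢
  rw [hk, add_zero, Real.cos_neg]

lemma cos_two_pi_mul_pos (h0 : 0 < t) (h1 : t < 1 / 4) : 0 < Real.cos (2 * π * t) :=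
  Real.cos_pos_of_mem_Ioo ⟨by nlinarith [Real.pi_pos], by nlinarith [Real.pi_pos]⟩

lemma sin_pi_mul_pos (h0 : 0 < t) (h1 : t < 1) : 0 < Real.sin (π * t) :=
  Real.sin_pos_of_pos_of_lt_pi (by positivity) (mul_lt_of_lt_one_right Real.pi_pos h1)

lemma phiHatFactor_mul_cos_mul_inv_Gamma (hk : Real.cos (k * π) = 0) (h0 : 0 < t)
    (h1 : t < 1 / 4) :
    phiHatFactor k t * Real.cos (k * π / 2 - π * t) * (Real.Gamma (1 - 2 * t))⁻¹ =
      Real.cos (π * t) * Real.Gamma (1 / 2 + k / 2 + t) * Real.Gamma (2 * t) /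
        Real.Gamma (1 / 2 - k / 2 + t) := by
  have hcos2 := cos_two_pi_mul_eq hk t
  have hcos2_pos := cos_two_pi_mul_pos h0 h1
  have hsin := (sin_pi_mul_pos h0 (by linarith)).ne'
  have hprod : Real.cos (k * π / 2 - π * t) * Real.cos (k * π / 2 + π * t) ≠ 0 := by
    rw [hcos2, mul_assoc] at hcos2_pos
    exact (pos_of_mul_pos_right hcos2_pos two_pos.le).ne'
  have hsub := left_ne_zero_of_mul hprod
  have hadd := right_ne_zero_of_mul hprod
  have hGamma_two : Real.Gamma (2 * t) * Real.Gamma (1 - 2 * t) =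
      π / (2 * Real.sin (π * t) * Real.cos (π * t)) := by
    rw [Real.Gamma_mul_Gamma_one_sub, ← Real.sin_two_mul]
    ring_nf
  have hGamma_k : Real.Gamma (1 / 2 + k / 2 + t) * Real.Gamma (1 / 2 - k / 2 - t) =
      π / Real.cos (k * π / 2 + π * t) := by
    rw [← Real.sin_add_pi_div_two, show 1 / 2 - k / 2 - t = 1 - (1 / 2 + k / 2 + t) by ring,
      Real.Gamma_mul_Gamma_one_sub]
    ring_nf
  have hcos : Real.cos (π * t) ≠ 0 :=
    (Real.cos_pos_of_mem_Ioo ⟨by nlinarith [Real.pi_pos], by nlinarith [Real.pi_pos]⟩).ne'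
  have hGamma_ne : Real.Gamma (1 - 2 * t) ≠ 0 := (Real.Gamma_pos_of_pos (by linarith)).ne'
  have hGamma_k_ne : Real.Gamma (1 / 2 - k / 2 - t) ≠ 0 :=
    right_ne_zero_of_mul (hGamma_k.trans_ne (div_ne_zero Real.pi_ne_zero hadd))
  rw [eq_div_of_mul_eq hGamma_ne hGamma_two, eq_div_of_mul_eq hGamma_k_ne hGamma_k, phiHatFactor,
    hcos2]
  generalize Real.cos (k * π / 2 - π * t) = cosSub at hsub ⊢
  generalize Real.cos (k * π / 2 + π * t) = cosAdd at hadd ⊢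
  field_simp

lemma continuous_inv_realGamma : Continuous fun s : ℝ ↦ (Real.Gamma s)⁻¹ := by
  have h := Complex.continuous_re.comp
    (Complex.differentiable_one_div_Gamma.continuous.comp Complex.continuous_ofReal)
  refine h.congr fun s ↦ ?_
  simp only [Function.comp_apply, Complex.Gamma_ofReal, ← Complex.ofReal_inv, Complex.ofReal_re]

end Coefficient

section Estimate

variable {x a T R k t : ℝ} {φ : ℝ → ℝ}

/-- The constant `C` in the pointwise estimate
`‖phiHatIt k φ t - main term‖ ≤ C * (T / x * (x ^ (2 * t) / a ^ (2 * t)) + 1)`, for cutoffs `φ`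
supported in `(0, R]`. -/
noncomputable def phiHatErrorConst (R k t : ℝ) : ℝ :=
  |phiHatFactor k t| *
    ((besselJTailBound ((-(2 * t) : ℝ) : ℂ) R +
        4 * |(Real.Gamma (1 - 2 * t))⁻¹| * 2 ^ (2 * t)) +
      (besselJTailBound ((2 * t : ℝ) : ℂ) R +
        |(Real.Gamma (1 + 2 * t))⁻¹| * 2 ^ (-(2 * t)) * (R ^ (2 * t) / (2 * t))))

lemma norm_factor_mul_sub_le {z w z₀ : ℂ} {D c c' : ℝ} (hc : |c| ≤ 1) (hc' : |c'| ≤ 1) :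
    ‖D * (c * z - c' * w) - D * c * z₀‖ ≤ |D| * (‖z - z₀‖ + ‖w‖) := by
  have hsplit : D * (c * z - c' * w) - D * c * z₀ = D * (c * (z - z₀) - c' * w) := by ring
  rw [hsplit, norm_mul, Complex.norm_real, Real.norm_eq_abs]
  gcongr
  refine (norm_sub_le _ _).trans (add_le_add ?_ ?_)
  all_goals
    rw [norm_mul, Complex.norm_real]
    exact mul_le_of_le_one_left (norm_nonneg _) ‹_›

lemma div_mul_rpow_div_four_pi_mul_eq (ha : 0 ≤ a) (g d x s : ℝ) :
    g / (d * 2 ^ s * π ^ s * (a / (4 * π)) ^ s) * ((2 ^ s - 1) * x ^ s / s) =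
      g / d * (2 ^ s * ((2 ^ s - 1) * (x ^ s / a ^ s) / s)) := by
  have hscale : 2 ^ s * π ^ s * (a / (4 * π)) ^ s = a ^ s / 2 ^ s := by
    rw [← Real.mul_rpow (by positivity) (by positivity),
      ← Real.mul_rpow (by positivity) (by positivity), ← Real.div_rpow ha two_pos.le]
    congr 1
    field_simp
    ring
  rw [mul_assoc d, mul_assoc d, hscale]
  simp only [div_eq_mul_inv, mul_inv, inv_inv]
  ring

lemma norm_phiHatIt_sub_le (hx : 0 < x) (hT : 0 ≤ T) (hTx : 2 * T ≤ x) (ha : 0 < a)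
    (haR : a / (x - T) ≤ R) (hφ : Measurable φ)
    (hlow : (Set.Icc (a / (2 * x)) (a / x)).indicator 1 ≤ φ)
    (hupp : φ ≤ (Set.Icc (a / (2 * x + 2 * T)) (a / (x - T))).indicator 1)
    (hk : Real.cos (k * π) = 0) (ht0 : 0 < t) (ht1 : t < 1 / 4) :
    ‖phiHatIt k φ t -
        Complex.exp ((k : ℂ) * (π : ℂ) * Complex.I / 2) *
          Complex.ofReal (Real.cos (π * t) * Real.Gamma (1 / 2 + k / 2 + t) *
            Real.Gamma (2 * t) /
            (Real.Gamma (1 / 2 - k / 2 + t) * (2 : ℝ) ^ (2 * t) * π ^ (2 * t) *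
              (a / (4 * π)) ^ (2 * t)) *
            (((2 : ℝ) ^ (2 * t) - 1) * x ^ (2 * t) / (2 * t)))‖ ≤
      phiHatErrorConst R k t * (T / x * (x ^ (2 * t) / a ^ (2 * t)) + 1) := by
  have hxT : 0 < x - T := by linarith
  have hR : 0 < R := (div_pos ha hxT).trans_le haR
  have hsub := norm_phiTilde_one_sub_sub_le hx hT hTx ha haR hφ hlow hupp
    (mul_pos two_pos ht0) (by linarith)
  have hadd := norm_phiTilde_one_add_le hφ (nonneg_of_indicator_one_le hlow) hupp (by positivity)
    (by gcongr; linarith) haR (mul_pos two_pos ht0)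
  set X := T / x * (x ^ (2 * t) / a ^ (2 * t))
  have hX : 0 ≤ X := by positivity
  rw [div_mul_rpow_div_four_pi_mul_eq ha.le, ← phiHatFactor_mul_cos_mul_inv_Gamma hk ht0 ht1,
    phiHatIt_eq, ← mul_sub, norm_mul, norm_exp_mul_pi_mul_I_div_two, one_mul,
    mul_assoc _ (Real.Gamma _)⁻¹, ← mul_assoc (Real.Gamma _)⁻¹,
    Complex.ofReal_mul (_ * Real.cos _), Complex.ofReal_mul (phiHatFactor k t)]
  refine (norm_factor_mul_sub_le (Real.abs_cos_le_one _) (Real.abs_cos_le_one _)).trans ?_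
  rw [phiHatErrorConst, mul_assoc |phiHatFactor k t|]
  refine mul_le_mul_of_nonneg_left ((add_le_add hsub hadd).trans ?_) (abs_nonneg _)
  have htail_sub := besselJTailBound_nonneg ((-(2 * t) : ℝ) : ℂ) hR.le
  have htail_add := besselJTailBound_nonneg ((2 * t : ℝ) : ℂ) hR.le
  have hmoment : 0 ≤ |(Real.Gamma (1 + 2 * t))⁻¹| * 2 ^ (-(2 * t)) * (R ^ (2 * t) / (2 * t)) := by
    positivity
  have hGamma : 0 ≤ |(Real.Gamma (1 - 2 * t))⁻¹| * (2 : ℝ) ^ (2 * t) := by positivity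
  nlinarith [mul_nonneg htail_sub hX, mul_nonneg htail_add hX, mul_nonneg hmoment hX]

lemma continuousOn_phiHatFactor :
    ContinuousOn (fun p : ℝ × ℝ ↦ phiHatFactor p.1 p.2) (Set.univ ×ˢ Set.Ioo 0 (1 / 4)) := by
  have htrig : ContinuousOn (fun p : ℝ × ℝ ↦ (Real.sin (π * p.2) * Real.cos (2 * π * p.2))⁻¹)
      (Set.univ ×ˢ Set.Ioo 0 (1 / 4)) :=
    ContinuousOn.inv₀ (by fun_prop) fun p ⟨_, hp0, hp1⟩ ↦
      (mul_pos (sin_pi_mul_pos hp0 (by linarith)) (cos_two_pi_mul_pos hp0 hp1)).ne'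
  have hGamma := continuous_inv_realGamma
  have hsub : Continuous fun p : ℝ × ℝ ↦ (Real.Gamma (1 / 2 - p.1 / 2 - p.2))⁻¹ :=
    hGamma.comp (by fun_prop)
  have hadd : Continuous fun p : ℝ × ℝ ↦ (Real.Gamma (1 / 2 - p.1 / 2 + p.2))⁻¹ :=
    hGamma.comp (by fun_prop)
  exact (continuousOn_const.mul htrig).mul (hsub.mul hadd).continuousOn

lemma continuousOn_phiHatErrorConst (hR : 0 < R) :
    ContinuousOn (fun p : ℝ × ℝ ↦ phiHatErrorConst R p.1 p.2)
      (Set.univ ×ˢ Set.Ioo 0 (1 / 4)) := by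
  have hpow {c : ℝ} (hc : 0 < c) {g : ℝ × ℝ → ℝ} (hg : Continuous g) :
      Continuous fun p ↦ c ^ g p :=
    continuous_const.rpow hg fun _ ↦ .inl hc.ne'
  have htail {g : ℝ × ℝ → ℝ} (hg : Continuous g) :
      Continuous fun p ↦ besselJTailBound (g p : ℂ) R :=
    (continuous_besselJTailBound hR).comp (Complex.continuous_ofReal.comp hg)
  have hGamma {g : ℝ × ℝ → ℝ} (hg : Continuous g) : Continuous fun p ↦ |(Real.Gamma (g p))⁻¹| :=
    (continuous_inv_realGamma.comp hg).abs
  have hmoment : ContinuousOn (fun p : ℝ × ℝ ↦ R ^ (2 * p.2) / (2 * p.2))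
      (Set.univ ×ˢ Set.Ioo 0 (1 / 4)) :=
    (hpow hR (by fun_prop)).continuousOn.div (by fun_prop) fun p hp ↦
      (mul_pos two_pos hp.2.1).ne'
  refine continuousOn_phiHatFactor.abs.mul (.add (Continuous.continuousOn ?_) (.add
    (Continuous.continuousOn ?_) (.mul (Continuous.continuousOn ?_) hmoment)))
  · exact (htail (by fun_prop)).add
      ((continuous_const.mul (hGamma (by fun_prop))).mul (hpow two_pos (by fun_prop)))
  · exact htail (by fun_prop)
  · exact (hGamma (by fun_prop)).mul (hpow two_pos (by fun_prop))

end Estimate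

theorem stmt7_general {R κ t₀ t₁ : ℝ} (hR : 0 < R) (ht₀ : 0 < t₀) (ht₁ : t₁ < 1 / 4) :
    ∃ C : ℝ, 0 ≤ C ∧ ∀ (x a T : ℝ) (φ : ℝ → ℝ) (k t : ℝ),
      0 < x → 0 ≤ T → 2 * T ≤ x → 0 < a → a / (x - T) ≤ R → Measurable φ →
      (Set.Icc (a / (2 * x)) (a / x)).indicator 1 ≤ φ →
      φ ≤ (Set.Icc (a / (2 * x + 2 * T)) (a / (x - T))).indicator 1 →
      |k| ≤ κ → Real.cos (k * π) = 0 → t₀ ≤ t → t ≤ t₁ →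
      ‖phiHatIt k φ t -
          Complex.exp ((k : ℂ) * (π : ℂ) * Complex.I / 2) *
            Complex.ofReal (Real.cos (π * t) * Real.Gamma (1 / 2 + k / 2 + t) *
              Real.Gamma (2 * t) /
              (Real.Gamma (1 / 2 - k / 2 + t) * (2 : ℝ) ^ (2 * t) * π ^ (2 * t) *
                (a / (4 * π)) ^ (2 * t)) *
              (((2 : ℝ) ^ (2 * t) - 1) * x ^ (2 * t) / (2 * t)))‖ ≤
        C * (T / x * (x ^ (2 * t) / a ^ (2 * t)) + 1) := by
  have hbox : Set.Icc (-κ) κ ×ˢ Set.Icc t₀ t₁ ⊆ Set.univ ×ˢ Set.Ioo (0 : ℝ) (1 / 4) :=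
    Set.prod_mono (Set.subset_univ _) fun t ht ↦ ⟨ht₀.trans_le ht.1, ht.2.trans_lt ht₁⟩
  obtain ⟨C, hC⟩ := (isCompact_Icc.prod isCompact_Icc).exists_bound_of_continuousOn
    ((continuousOn_phiHatErrorConst hR).mono hbox)
  refine ⟨max C 0, le_max_right _ _, fun x a T φ k t hx hT hTx ha haR hφ hlow hupp hκ hk h0 h1 ↦ ?_⟩
  refine (norm_phiHatIt_sub_le hx hT hTx ha haR hφ hlow hupp hk (ht₀.trans_le h0)
    (h1.trans_lt ht₁)).trans ?_
  gcongr
  exact (le_abs_self _).trans ((hC (k, t) ⟨abs_le.mp hκ, h0, h1⟩).trans (le_max_left _ _))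

lemma three_mul_rpow_one_sub_le {δ x : ℝ} (hδ : 0 < δ) (hx : (3 : ℝ) ^ (1 / δ) ≤ x) :
    3 * x ^ (1 - δ) ≤ x := by
  have hx0 : 0 < x := (Real.rpow_pos_of_pos three_pos _).trans_le hx
  have hthree : 3 ≤ x ^ δ := by
    calc (3 : ℝ) = ((3 : ℝ) ^ (1 / δ)) ^ δ := by
          rw [← Real.rpow_mul three_pos.le, one_div_mul_cancel hδ.ne', Real.rpow_one]
      _ ≤ x ^ δ := by gcongr
  calc 3 * x ^ (1 - δ) ≤ x ^ δ * x ^ (1 - δ) := by gcongr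
    _ = x := by rw [← Real.rpow_add hx0, add_sub_cancel, Real.rpow_one]

lemma rpow_one_sub_div_mul_rpow {x : ℝ} (hx : 0 < x) (δ s c : ℝ) :
    x ^ (1 - δ) / x * (x ^ s / c) = x ^ (s - δ) / c := by
  rw [← Real.rpow_sub_one hx.ne', ← mul_div_assoc, ← Real.rpow_add hx]
  ring_nf

lemma cos_mul_pi_eq_zero {k : ℝ} (hk : k = 1 / 2 ∨ k = 3 / 2) : Real.cos (k * π) = 0 := by
  rw [Real.cos_eq_zero_iff]
  rcases hk with rfl | rfl
  exacts [⟨0, by push_cast; ring⟩, ⟨1, by push_cast; ring⟩]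

theorem stmt7 :
    ∀ δ t₀ : ℝ, 0 < δ → δ < 1 / 2 → 0 < t₀ → t₀ ≤ 1 / 12 →
      ∃ C : ℝ, ∀ (x a T T' : ℝ) (φ : ℝ → ℝ) (k t : ℝ),
        (3 : ℝ) ^ (1 / δ) ≤ x → T = x ^ (1 - δ) → T' = x ^ (1 - 2 * δ) →
        0 < a → a / (x - T) ≤ 1.999 →
        ContDiff ℝ 1 φ → (∀ u, 0 ≤ φ u ∧ φ u ≤ 1) →
        (∀ u, a / (2 * x) ≤ u → u ≤ a / x → φ u = 1) →
        (∀ u, u ≤ a / (2 * x + 2 * T) → φ u = 0) →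
        (∀ u, a / (x - T) ≤ u → φ u = 0) →
        (∀ u ∈ Set.Ioo (a / (2 * x + 2 * T - 2 * T')) (a / (2 * x + 2 * T')),
          deriv φ u = 2 * x * (x + T) / (a * T)) →
        (∀ u ∈ Set.Ioo (a / (x - T')) (a / (x - T + T')),
          deriv φ u = -(x * (x - T)) / (a * T)) →
        (∀ u ∈ Set.Ioo (a / (2 * x + 2 * T)) (a / (2 * x + 2 * T - 2 * T')) ∪
            Set.Ioo (a / (2 * x + 2 * T')) (a / (2 * x)),
          0 ≤ deriv φ u ∧ deriv φ u ≤ 4 * x * (x + T) / (a * T)) →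
        (∀ u ∈ Set.Ioo (a / x) (a / (x - T')) ∪ Set.Ioo (a / (x - T + T')) (a / (x - T)),
          -(2 * x * (x - T)) / (a * T) ≤ deriv φ u ∧ deriv φ u ≤ 0) →
        (∀ u, u ∉ Set.Icc (a / (2 * x + 2 * T)) (a / (2 * x)) ∪
            Set.Icc (a / x) (a / (x - T)) → deriv φ u = 0) →
        (k = 1 / 2 ∨ k = 3 / 2) → t₀ ≤ t → t ≤ 1 / 12 →
        ‖phiHatIt k φ t -
            Complex.exp ((k : ℂ) * (π : ℂ) * Complex.I / 2) *
              Complex.ofReal (Real.cos (π * t) * Real.Gamma (1 / 2 + k / 2 + t) *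
                Real.Gamma (2 * t) /
                (Real.Gamma (1 / 2 - k / 2 + t) * (2 : ℝ) ^ (2 * t) * π ^ (2 * t) *
                  (a / (4 * π)) ^ (2 * t)) *
                (((2 : ℝ) ^ (2 * t) - 1) * x ^ (2 * t) / (2 * t)))‖ ≤
          C * (x ^ (2 * t - δ) / a ^ (2 * t) + a ^ (2 * t) / x ^ (2 * t) + 1) := by
  intro δ t₀ hδ _ ht₀ _
  obtain ⟨C, hC0, hC⟩ := stmt7_general (R := 1.999) (κ := 3 / 2) (t₁ := 1 / 12) (by norm_num) ht₀
    (by norm_num)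
  refine ⟨C, fun x a T _ φ k t hx hT _ ha haR hφ h01 h1 hleft hright _ _ _ _ _ hk h0 ht ↦ ?_⟩
  subst hT
  have hx0 : 0 < x := (Real.rpow_pos_of_pos three_pos _).trans_le hx
  have hT0 : 0 < x ^ (1 - δ) := Real.rpow_pos_of_pos hx0 _
  have hlow : (Set.Icc (a / (2 * x)) (a / x)).indicator 1 ≤ φ :=
    Set.indicator_le' (fun u hu ↦ (h1 u hu.1 hu.2).ge) fun u _ ↦ (h01 u).1
  have hupp : φ ≤ (Set.Icc (a / (2 * x + 2 * x ^ (1 - δ))) (a / (x - x ^ (1 - δ)))).indicator 1 :=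
    Set.le_indicator (fun u _ ↦ (h01 u).2) fun u hu ↦ by
      rcases not_and_or.mp hu with h | h
      · exact (hleft u (not_le.mp h).le).le
      · exact (hright u (not_le.mp h).le).le
  have hk_abs : |k| ≤ 3 / 2 := by rcases hk with rfl | rfl <;> norm_num [abs_of_pos]
  have hmain := hC x a _ φ k t hx0 hT0.le (by linarith [three_mul_rpow_one_sub_le hδ hx]) ha haR
    hφ.continuous.measurable hlow hupp hk_abs (cos_mul_pi_eq_zero hk) h0 ht
  rw [rpow_one_sub_div_mul_rpow hx0] at hmain
  refine hmain.trans (mul_le_mul_of_nonneg_left ?_ hC0)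
  linarith [show 0 ≤ a ^ (2 * t) / x ^ (2 * t) by positivity]
end
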